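/- arXiv:2304.11333 — 8 statements merged into one kernel-verified Lean document; each statement's English description precedes it below -/
import Mathlib

section
/- Let n ≥ 1 and let s be an integer with 1 ≤ s ≤ n. Let a_1, …, a_s be positive integers with a_1 + ⋯ + a_s = n, and let N be the number of (unordered) set partitions of {1, …, n} into s blocks whose multiset of block sizes equals the multiset {a_1, …, a_s}. If s ≠ 1, s ≠ n, and it is not the case that n = 4, s = 2 and a_1 = a_2 = 2, then N ≥ n. -/
open Finset in
noncomputable def TT {α : Type*} [DecidableEq α] (S : Finset α) (m : Multiset ℕ) : Finset (Finpartition S) :=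
  Finset.univ.filter (fun P => Multiset.map Finset.card P.parts.val = m)

lemma TT_ext {α : Type*} [DecidableEq α] {S B : Finset α} (hB : B ⊆ S) (hne : B.Nonempty)
    (Q : Finpartition (S \ B)) :
    B ∉ Q.parts := by
  intro h
  have h1 := Q.le h
  obtain ⟨x, hx⟩ := hne
  have := h1 hx
  simp at this
  exact this.2 hx

def TTe {α : Type*} [DecidableEq α] {S B : Finset α} (hB : B ⊆ S) (hne : B.Nonempty)
    (Q : Finpartition (S \ B)) : Finpartition S :=
  Q.extend (b := B) (c := S) (by simpa using hne.ne_empty) Finset.sdiff_disjoint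
    (by simpa using hB)

lemma TTe_parts {α : Type*} [DecidableEq α] {S B : Finset α} (hB : B ⊆ S) (hne : B.Nonempty)
    (Q : Finpartition (S \ B)) : (TTe hB hne Q).parts = insert B Q.parts := rfl

lemma TTe_mem {α : Type*} [DecidableEq α] {S B : Finset α} (hB : B ⊆ S) (hne : B.Nonempty)
    (Q : Finpartition (S \ B)) (m : Multiset ℕ) (hm : B.card ∈ m)
    (hQ : Q ∈ TT (S \ B) (m.erase B.card)) : TTe hB hne Q ∈ TT S m := by
  simp only [TT, Finset.mem_filter, Finset.mem_univ, true_and] at hQ ⊢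
  rw [TTe_parts, Finset.insert_val_of_notMem (TT_ext hB hne Q), Multiset.map_cons, hQ,
    Multiset.cons_erase hm]

lemma TT_nonempty {α : Type*} [DecidableEq α] (m : Multiset ℕ) : ∀ (S : Finset α)
    (_ : ∀ k ∈ m, 0 < k) (_ : m.sum = S.card), 1 ≤ (TT S m).card := by
  induction m using Multiset.induction with
  | empty =>
    intro S _ h
    simp at h
    have : S = ∅ := by
      rw [← Finset.card_eq_zero]; exact h.symm
    subst this
    rw [Nat.one_le_iff_ne_zero, ← Nat.pos_iff_ne_zero, Finset.card_pos]
    refine ⟨Finpartition.empty _, ?_⟩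
    simp [TT]
  | cons k m ih =>
    intro S hp h
    simp at h
    obtain ⟨B, hB, hk⟩ := Finset.exists_subset_card_eq (s := S) (n := k) (by omega)
    subst hk
    have hne : B.Nonempty := by
      rw [← Finset.card_pos]; exact hp _ (by simp)
    have := ih (S \ B) (fun k hk => hp k (by simp [hk])) (by rw [Finset.card_sdiff_of_subset hB]; omega)
    obtain ⟨Q, hQ⟩ := Finset.card_pos.1 this
    exact Finset.card_pos.2 ⟨TTe hB hne Q, TTe_mem hB hne Q _ (by simp) (by simpa using hQ)⟩

lemma TT_count {α : Type*} [DecidableEq α] (S : Finset α) (x : α) (m : Multiset ℕ)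
    (F : Finset (Finset α)) (hF : ∀ B ∈ F, x ∈ B ∧ B ⊆ S ∧ B.card ∈ m) (c : ℕ)
    (hc : ∀ B ∈ F, c ≤ (TT (S \ B) (m.erase B.card)).card) : F.card * c ≤ (TT S m).card := by
  classical
  have h1 : ∀ B ∈ F, c ≤ ((TT S m).filter (fun P => P.part x = B)).card := by
    intro B hBF
    obtain ⟨hx, hB, hm⟩ := hF B hBF
    have hne : B.Nonempty := ⟨x, hx⟩
    refine (hc B hBF).trans ?_
    refine Finset.card_le_card_of_injOn (TTe hB hne) ?_ ?_
    · intro Q hQ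
      have hQ' : Q ∈ TT (S \ B) (m.erase B.card) := hQ
      have : TTe hB hne Q ∈ TT S m ∧ (TTe hB hne Q).part x = B :=
        ⟨TTe_mem hB hne Q m hm hQ', Finpartition.part_eq_of_mem _ (by simp [TTe_parts]) hx⟩
      simpa using this
    · intro Q _ Q' _ h
      have h2 : insert B Q.parts = insert B Q'.parts := by
        rw [← TTe_parts hB hne, h, TTe_parts]
      ext1
      rw [← Finset.erase_insert (TT_ext hB hne Q), h2, Finset.erase_insert (TT_ext hB hne Q')]
  calc F.card * c = ∑ B ∈ F, c := by simp
    _ ≤ ∑ B ∈ F, ((TT S m).filter (fun P => P.part x = B)).card := Finset.sum_le_sum h1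
    _ = ((TT S m).filter (fun P => P.part x ∈ F)).card := by
      rw [Finset.card_eq_sum_card_fiberwise (f := fun P => P.part x) (t := F)]
      · refine Finset.sum_congr rfl fun B hB => ?_
        congr 1
        ext P
        simp only [Finset.mem_filter]
        constructor
        · rintro ⟨h, rfl⟩; exact ⟨⟨h, hB⟩, rfl⟩
        · rintro ⟨⟨h, _⟩, h'⟩; exact ⟨h, h'⟩
      · intro P hP
        simp at hP
        exact hP.2
    _ ≤ _ := Finset.card_le_card (Finset.filter_subset _ _)

/-- blocks of size `k` containing `x` -/
def FF {α : Type*} [DecidableEq α] (S : Finset α) (x : α) (k : ℕ) : Finset (Finset α) :=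
  (Finset.powersetCard (k-1) (S.erase x)).image (insert x)

lemma FF_mem {α : Type*} [DecidableEq α] {S : Finset α} {x : α} (hx : x ∈ S) {k : ℕ} (hk : 0 < k)
    {B : Finset α} (hB : B ∈ FF S x k) : x ∈ B ∧ B ⊆ S ∧ B.card = k := by
  simp only [FF, Finset.mem_image, Finset.mem_powersetCard] at hB
  obtain ⟨C, ⟨hC, hc⟩, rfl⟩ := hB
  have hxC : x ∉ C := fun h => by simpa using hC h
  refine ⟨by simp, ?_, ?_⟩
  · exact Finset.insert_subset hx (hC.trans (Finset.erase_subset _ _))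
  · rw [Finset.card_insert_of_notMem hxC]; omega

lemma FF_card {α : Type*} [DecidableEq α] {S : Finset α} {x : α} (hx : x ∈ S) (k : ℕ) :
    (FF S x k).card = (S.card - 1).choose (k - 1) := by
  rw [FF, Finset.card_image_of_injOn, Finset.card_powersetCard, Finset.card_erase_of_mem hx]
  intro C hC D hD h
  simp only [Finset.mem_coe, Finset.mem_powersetCard] at hC hD
  have hxC : x ∉ C := fun h => by simpa using hC.1 h
  have hxD : x ∉ D := fun h => by simpa using hD.1 h
  rw [← Finset.erase_insert hxC, h, Finset.erase_insert hxD]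

lemma erase_ok {α : Type*} [DecidableEq α] {S B : Finset α} {m : Multiset ℕ} (hB : B ⊆ S)
    (hp : ∀ k ∈ m, 0 < k) (hm : m.sum = S.card) (h : B.card ∈ m) :
    (∀ k ∈ m.erase B.card, 0 < k) ∧ (m.erase B.card).sum = (S \ B).card := by
  refine ⟨fun k hk => hp k (Multiset.mem_of_mem_erase hk), ?_⟩
  have := Multiset.sum_erase h
  rw [Finset.card_sdiff_of_subset hB]; omega

lemma TT_one {α : Type*} [DecidableEq α] {S : Finset α} {x : α} (hx : x ∈ S) {m : Multiset ℕ}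
    (hp : ∀ k ∈ m, 0 < k) (hm : m.sum = S.card) {k : ℕ} (hk : k ∈ m) :
    (S.card - 1).choose (k - 1) ≤ (TT S m).card := by
  have := TT_count S x m (FF S x k) (fun B hB => by
    obtain ⟨h1, h2, h3⟩ := FF_mem hx (hp k hk) hB
    exact ⟨h1, h2, h3 ▸ hk⟩) 1 (fun B hB => by
    obtain ⟨h1, h2, h3⟩ := FF_mem hx (hp k hk) hB
    obtain ⟨h4, h5⟩ := erase_ok h2 hp hm (h3 ▸ hk)
    exact TT_nonempty _ _ h4 h5)
  rwa [mul_one, FF_card hx] at this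

lemma TT_two {α : Type*} [DecidableEq α] {S : Finset α} {x : α} (hx : x ∈ S) {m : Multiset ℕ}
    (hp : ∀ k ∈ m, 0 < k) (hm : m.sum = S.card) {k l : ℕ} (hk : k ∈ m) (hl : l ∈ m) (hkl : k ≠ l) :
    (S.card - 1).choose (k - 1) + (S.card - 1).choose (l - 1) ≤ (TT S m).card := by
  have key : ∀ B ∈ FF S x k ∪ FF S x l, x ∈ B ∧ B ⊆ S ∧ B.card ∈ m := by
    intro B hB
    rcases Finset.mem_union.1 hB with hB | hB
    · obtain ⟨h1, h2, h3⟩ := FF_mem hx (hp k hk) hB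
      exact ⟨h1, h2, h3 ▸ hk⟩
    · obtain ⟨h1, h2, h3⟩ := FF_mem hx (hp l hl) hB
      exact ⟨h1, h2, h3 ▸ hl⟩
  have := TT_count S x m _ key 1 (fun B hB => by
    obtain ⟨h1, h2, h3⟩ := key B hB
    obtain ⟨h4, h5⟩ := erase_ok h2 hp hm h3
    exact TT_nonempty _ _ h4 h5)
  rwa [mul_one, Finset.card_union_of_disjoint, FF_card hx, FF_card hx] at this
  rw [Finset.disjoint_left]
  intro B hB hB'
  exact hkl ((FF_mem hx (hp k hk) hB).2.2.symm.trans (FF_mem hx (hp l hl) hB').2.2)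

lemma TT_sq {α : Type*} [DecidableEq α] {S : Finset α} {m : Multiset ℕ}
    (hp : ∀ k ∈ m, k = 2) (hm : m.sum = S.card) (h6 : 5 ≤ S.card) :
    S.card ≤ (TT S m).card := by
  obtain ⟨x, hx⟩ : S.Nonempty := Finset.card_pos.1 (by omega)
  have hp' : ∀ k ∈ m, 0 < k := fun k hk => by rw [hp k hk]; omega
  have h2 : 2 ∈ m := by
    obtain ⟨k, hk⟩ := Multiset.exists_mem_of_ne_zero (s := m) (by rintro rfl; simp at hm; omega)
    exact hp k hk ▸ hk
  have h2' : 2 ∈ m.erase 2 := by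
    have := Multiset.sum_erase h2
    obtain ⟨k, hk⟩ := Multiset.exists_mem_of_ne_zero (s := m.erase 2)
      (by intro h; rw [h] at this; simp at this; omega)
    exact hp k (Multiset.mem_of_mem_erase hk) ▸ hk
  have := TT_count S x m (FF S x 2) (fun B hB => by
    obtain ⟨h1, h2', h3⟩ := FF_mem hx (by omega) hB
    exact ⟨h1, h2', h3 ▸ h2⟩) (S.card - 3) (fun B hB => by
    obtain ⟨h1, h4, h3⟩ := FF_mem hx (by omega) hB
    obtain ⟨h5, h6⟩ := erase_ok h4 hp' hm (h3 ▸ h2)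
    have hc : (S \ B).card = S.card - 2 := by rw [Finset.card_sdiff_of_subset h4, h3]
    obtain ⟨y, hy⟩ : (S \ B).Nonempty := Finset.card_pos.1 (by omega)
    have := TT_one hy h5 h6 (k := 2) (by rw [h3]; exact h2')
    rw [hc] at this
    simp at this
    omega)
  rw [FF_card hx] at this
  simp at this
  obtain ⟨t, ht⟩ : ∃ t, S.card = t + 5 := ⟨S.card - 5, by omega⟩
  rw [ht] at this ⊢
  refine le_trans ?_ this
  simp only [Nat.add_sub_cancel, show t + 5 - 1 = t + 4 by omega, show t + 5 - 3 = t + 2 by omega]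
  nlinarith

lemma choose_big' (t u : ℕ) : t + 5 + u ≤ (t + u + 4).choose (t + 2) := by
  induction t with
  | zero =>
    induction u with
    | zero => decide
    | succ u ih =>
      have := Nat.choose_succ_succ (0 + u + 4) 1
      have h1 := Nat.choose_one_right (0 + u + 4)
      rw [show 0 + (u + 1) + 4 = (0 + u + 4).succ by omega, show 0 + 2 = Nat.succ 1 by rfl, this]
      have ih' : 0 + 5 + u ≤ (0 + u + 4).choose (Nat.succ 1) := ih
      omega
  | succ t ih =>
    have := Nat.choose_succ_succ (t + u + 4) (t + 2)
    have h1 := Nat.choose_pos (n := t + u + 4) (k := (t + 2).succ) (by omega)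
    rw [show t + 1 + u + 4 = (t + u + 4).succ by omega, show t + 1 + 2 = (t + 2).succ by omega, this]
    omega

lemma choose_big {n k : ℕ} (h : 3 ≤ k) (h' : k + 2 ≤ n) : n ≤ (n-1).choose (k-1) := by
  obtain ⟨t, rfl⟩ : ∃ t, k = t + 3 := ⟨k - 3, by omega⟩
  obtain ⟨u, rfl⟩ : ∃ u, n = t + 5 + u := ⟨n - (t + 5), by omega⟩
  have := choose_big' t u
  rwa [show t + 5 + u - 1 = t + u + 4 by omega, show t + 3 - 1 = t + 2 by omega]

lemma TT_main {α : Type*} [DecidableEq α] {S : Finset α} {m : Multiset ℕ}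
    (hp : ∀ k ∈ m, 0 < k) (hm : m.sum = S.card) (h1 : 2 ≤ m.card) (h2 : m.card ≠ S.card)
    (hex : ¬ (S.card = 4 ∧ m.card = 2 ∧ ∀ k ∈ m, k = 2)) : S.card ≤ (TT S m).card := by
  have hcard : ∀ m : Multiset ℕ, (∀ k ∈ m, 0 < k) → m.card ≤ m.sum := by
    intro m hp
    simpa using Multiset.card_nsmul_le_sum (s := m) (a := 1) (fun k hk => hp k hk)
  have hcm := hcard m hp
  obtain ⟨x, hx⟩ : S.Nonempty := Finset.card_pos.1 (by omega)
  have hlt : ∀ k ∈ m, k < S.card := by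
    intro k hk
    have h3 := Multiset.sum_erase hk
    have h4 := hcard (m.erase k) (fun k hk => hp k (Multiset.mem_of_mem_erase hk))
    rw [Multiset.card_erase_of_mem hk] at h4
    simp only [Nat.pred_eq_sub_one] at h4
    omega
  by_cases hA : ∃ k ∈ m, 3 ≤ k
  · obtain ⟨k, hk, hk3⟩ := hA
    have := hlt k hk
    by_cases hk2 : k + 2 ≤ S.card
    · exact (choose_big hk3 hk2).trans (TT_one hx hp hm hk)
    · have hkn : k + 1 = S.card := by omega
      have h3 := Multiset.sum_erase hk
      obtain ⟨l, hl⟩ := Multiset.exists_mem_of_ne_zero (s := m.erase k)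
        (by intro h; rw [h] at h3; simp at h3; omega)
      have hl1 := Multiset.sum_erase hl
      have hl0 := Multiset.mem_of_mem_erase hl
      have hlp := hp l hl0
      have hl1 : l = 1 := by omega
      subst hl1
      have := TT_two hx hp hm hk hl0 (by omega)
      rw [← hkn] at this ⊢
      obtain ⟨t, rfl⟩ : ∃ t, k = t + 1 := ⟨k - 1, by omega⟩
      simpa using this
  · push Not at hA
    by_cases h1m : 1 ∈ m
    · by_cases h2m : 2 ∈ m
      · have := TT_two hx hp hm h1m h2m (by omega)
        simp at this
        omega
      · exfalso
        apply h2
        have : m = Multiset.replicate m.card 1 := Multiset.eq_replicate.2 ⟨rfl, fun k hk => by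
          have := hA k hk
          have := hp k hk
          have : k ≠ 2 := by rintro rfl; exact h2m hk
          omega⟩
        rw [← hm]
        conv_rhs => rw [this]
        simp
    · have hall : ∀ k ∈ m, k = 2 := fun k hk => by
        have := hA k hk
        have := hp k hk
        have : k ≠ 1 := by rintro rfl; exact h1m hk
        omega
      have : m = Multiset.replicate m.card 2 := Multiset.eq_replicate.2 ⟨rfl, hall⟩
      have hs : m.sum = m.card * 2 := by
        conv_lhs => rw [this]
        simp
      refine TT_sq hall hm ?_
      by_contra hlt
      exact hex ⟨by omega, by omega, hall⟩


/-- Lemma 4.3 (partition-number lemma): the number of unordered set partitions of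
`{1,…,n}` into blocks of sizes `a_1,…,a_s` is at least `n`, unless `s = 1`, `s = n`,
or `n = 4, s = 2, a_1 = a_2 = 2`. -/
theorem stmt_0 (n s : ℕ) (hn : 1 ≤ n) (hs1 : 1 ≤ s) (hsn : s ≤ n)
    (a : Fin s → ℕ) (hpos : ∀ i, 0 < a i) (hsum : ∑ i, a i = n)
    (hs_ne_one : s ≠ 1) (hs_ne_n : s ≠ n)
    (hexc : ¬(n = 4 ∧ s = 2 ∧ ∀ i, a i = 2)) :
    n ≤ Set.ncard {P : Finpartition (Finset.univ : Finset (Fin n)) |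
        Multiset.map Finset.card P.parts.val = Multiset.map a Finset.univ.val} := by
  have h := TT_main (S := (Finset.univ : Finset (Fin n))) (m := Multiset.map a Finset.univ.val)
    (by simpa using hpos) (by rw [Finset.card_univ, Fintype.card_fin]; exact hsum) (by simp; omega) (by simpa using hs_ne_n)
    (by simpa using hexc)
  have e : {P : Finpartition (Finset.univ : Finset (Fin n)) |
        Multiset.map Finset.card P.parts.val = Multiset.map a Finset.univ.val} =
      ((TT (Finset.univ : Finset (Fin n)) (Multiset.map a Finset.univ.val) :
        Finset (Finpartition (Finset.univ : Finset (Fin n)))) : Set _) := by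
    ext P
    simp [TT]
  rw [e, Set.ncard_coe_finset]
  simpa using h
end

section
/- Let K = (V, E) be a finite simple graph having at least s connected components, where s ≥ 1, and let 𝒞 be a finite multiset of colors such that the cardinality of 𝒞 counted with multiplicity is at least |V| and the number of distinct elements of 𝒞 is at least |V| − s + 1. Then there exists a coloring of K by 𝒞, i.e. a map φ : V → colors such that the multiset image {φ(v) : v ∈ V} is a sub-multiset of 𝒞 (each element of 𝒞 is used no more often than its multiplicity in 𝒞) and φ(u) ≠ φ(v) whenever u and v are adjacent in K. -/
theorem aux_step {V C ι : Type*} [DecidableEq V] [DecidableEq C] (c : V → ι)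
    (A : Finset V) (M : Multiset C) (v : V) (x : C) (hv : v ∈ A) (hx : x ∈ M)
    (h : x ∉ M.erase x ∨ ∀ u ∈ A.erase v, c u ≠ c v)
    (ih : ∃ φ : V → C, Multiset.map φ (A.erase v).val = M.erase x ∧
      ∀ a ∈ A.erase v, ∀ b ∈ A.erase v, a ≠ b → c a = c b → φ a ≠ φ b) :
    ∃ φ : V → C, Multiset.map φ A.val = M ∧
      ∀ a ∈ A, ∀ b ∈ A, a ≠ b → c a = c b → φ a ≠ φ b := by
  obtain ⟨φ, h1, h2⟩ := ih
  have key : ∀ a ∈ A.erase v, c a = c v → φ a ≠ x := by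
    intro a ha hc hax
    rcases h with h | h
    · apply h
      rw [← h1, ← hax]
      exact Multiset.mem_map_of_mem φ ha
    · exact h a ha hc
  refine ⟨Function.update φ v x, ?_, ?_⟩
  · have hA : A.val = v ::ₘ (A.erase v).val := by
      rw [Finset.erase_val]; exact (Multiset.cons_erase hv).symm
    rw [hA, Multiset.map_cons, Function.update_self, ← Multiset.cons_erase hx, ← h1]
    congr 1
    · apply Multiset.map_congr rfl
      intro a ha
      have : a ≠ v := Finset.ne_of_mem_erase (s := A) ha
      simp [this]
  · intro a ha b hb hab hc
    by_cases hav : a = v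
    · subst hav
      have hb' : b ∈ A.erase a := Finset.mem_erase.2 ⟨hab.symm, hb⟩
      rw [Function.update_self, Function.update_of_ne hab.symm]
      exact (key b hb' hc.symm).symm
    · have ha' : a ∈ A.erase v := Finset.mem_erase.2 ⟨hav, ha⟩
      by_cases hbv : b = v
      · subst hbv
        rw [Function.update_self, Function.update_of_ne hab]
        exact key a ha' hc
      · rw [Function.update_of_ne hav, Function.update_of_ne hbv]
        exact h2 a ha' b (Finset.mem_erase.2 ⟨hbv, hb⟩) hab hc

theorem aux_main {V C ι : Type*} [DecidableEq V] [DecidableEq C] [DecidableEq ι] [Nonempty C]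
    (c : V → ι) (n : ℕ) : ∀ (A : Finset V) (M : Multiset C), A.card = n → M.card = n →
    (n < M.toFinset.card + (A.image c).card ∨ M.Nodup) →
    ∃ φ : V → C, Multiset.map φ A.val = M ∧
      ∀ a ∈ A, ∀ b ∈ A, a ≠ b → c a = c b → φ a ≠ φ b := by
  induction n with
  | zero =>
    intro A M hA hM _
    rw [Finset.card_eq_zero] at hA
    rw [Multiset.card_eq_zero] at hM
    subst hA hM
    exact ⟨fun _ => Classical.arbitrary C, by simp, by simp⟩
  | succ n IH =>
    intro A M hA hM h
    by_cases hnd : M.Nodup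
    · obtain ⟨v, hv⟩ := Finset.card_pos.1 (by omega : 0 < A.card)
      obtain ⟨x, hx⟩ := Multiset.card_pos_iff_exists_mem.1 (by omega : 0 < M.card)
      refine aux_step c A M v x hv hx (Or.inl hnd.notMem_erase) (IH _ _ ?_ ?_ ?_)
      · rw [Finset.card_erase_of_mem hv]; omega
      · rw [Multiset.card_erase_of_mem hx, hM]; rfl
      · exact Or.inr (hnd.erase x)
    have h' : n + 1 < M.toFinset.card + (A.image c).card := h.resolve_right hnd
    by_cases hsing : ∃ v ∈ A, ∀ u ∈ A.erase v, c u ≠ c v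
    · obtain ⟨v, hv, hs⟩ := hsing
      obtain ⟨x, hx2⟩ : ∃ x, 1 < M.count x := by
        rw [Multiset.nodup_iff_count_le_one] at hnd
        push Not at hnd
        exact hnd
      have hx : x ∈ M := Multiset.count_pos.1 (by omega)
      refine aux_step c A M v x hv hx (Or.inr hs) (IH _ _ ?_ ?_ (Or.inl ?_))
      · rw [Finset.card_erase_of_mem hv]; omega
      · rw [Multiset.card_erase_of_mem hx, hM]; rfl
      · have e1 : M.toFinset ⊆ (M.erase x).toFinset := by
          intro y hy
          rw [Multiset.mem_toFinset] at hy ⊢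
          by_cases hyx : y = x
          · subst hyx
            rw [← Multiset.count_pos, Multiset.count_erase_self]; omega
          · exact (Multiset.mem_erase_of_ne hyx).2 hy
        have e2 : A.image c ⊆ insert (c v) ((A.erase v).image c) := by
          rw [← Finset.image_insert, Finset.insert_erase hv]
        have := Finset.card_le_card e1
        have := Finset.card_le_card e2
        have := Finset.card_insert_le (c v) ((A.erase v).image c)
        omega
    · push Not at hsing
      obtain ⟨x, hx, hx1⟩ : ∃ x ∈ M, M.count x = 1 := by
        by_contra hcon
        push Not at hcon
        have b1 : M.toFinset.card * 2 ≤ n + 1 := by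
          rw [← hM, ← Multiset.toFinset_sum_count_eq M, ← smul_eq_mul]
          apply Finset.card_nsmul_le_sum
          intro y hy
          rw [Multiset.mem_toFinset] at hy
          have := hcon y hy
          have := Multiset.count_pos.2 hy
          omega
        have b2 : (A.image c).card * 2 ≤ n + 1 := by
          rw [← hA, Finset.card_eq_sum_card_image c A, ← smul_eq_mul]
          apply Finset.card_nsmul_le_sum
          intro y hy
          obtain ⟨v, hv, rfl⟩ := Finset.mem_image.1 hy
          obtain ⟨u, hu, huv⟩ := hsing v hv
          rw [Finset.mem_erase] at hu
          exact Finset.one_lt_card.2 ⟨u, by simp [hu.2, huv], v, by simp [hv], hu.1⟩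
        omega
      obtain ⟨v, hv⟩ := Finset.card_pos.1 (by omega : 0 < A.card)
      obtain ⟨u, hu, huv⟩ := hsing v hv
      refine aux_step c A M v x hv hx (Or.inl ?_) (IH _ _ ?_ ?_ (Or.inl ?_))
      · rw [← Multiset.count_pos, Multiset.count_erase_self]; omega
      · rw [Finset.card_erase_of_mem hv]; omega
      · rw [Multiset.card_erase_of_mem hx, hM]; rfl
      · have e1 : M.toFinset ⊆ insert x (M.erase x).toFinset := by
          intro y hy
          rw [Multiset.mem_toFinset] at hy
          rw [Finset.mem_insert, Multiset.mem_toFinset]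
          by_cases hyx : y = x
          · exact Or.inl hyx
          · exact Or.inr ((Multiset.mem_erase_of_ne hyx).2 hy)
        have e2 : A.image c ⊆ (A.erase v).image c := by
          intro y hy
          obtain ⟨w, hw, rfl⟩ := Finset.mem_image.1 hy
          by_cases hwv : w = v
          · subst hwv
            exact Finset.mem_image.2 ⟨u, hu, huv⟩
          · exact Finset.mem_image.2 ⟨w, Finset.mem_erase.2 ⟨hwv, hw⟩, rfl⟩
        have := Finset.card_le_card e1
        have := Finset.card_le_card e2
        have := Finset.card_insert_le x (M.erase x).toFinset
        omega

theorem aux_sub {C : Type*} (M : Multiset C) (n : ℕ) (h : n ≤ M.card) :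
    ∃ N ≤ M, N.card = n := by
  induction M using Quotient.inductionOn with
  | h l =>
    refine ⟨(l.take n : List C), ?_, ?_⟩
    · exact (List.take_sublist n l).subperm
    · have : n ≤ l.length := h
      simpa using this

/-- Lemma 4.4 (coloring lemma): if a finite simple graph `K` has at least `s ≥ 1`
connected components, and `𝒞` is a multiset of colors of total size at least `|V|`
with at least `|V| - s + 1` distinct colors, then there is a coloring of `K` by `𝒞`:
a map `φ : V → C` using each color no more often than its multiplicity in `𝒞` and
giving adjacent vertices different colors. -/
theorem stmt_1 {V C : Type*} [Fintype V] [DecidableEq C]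
    (K : SimpleGraph V)
    (s : ℕ) (hs : 1 ≤ s) (hcomp : s ≤ Nat.card K.ConnectedComponent)
    (𝒞 : Multiset C)
    (hsize : Fintype.card V ≤ Multiset.card 𝒞)
    (hcolors : Fintype.card V - s + 1 ≤ 𝒞.toFinset.card) :
    ∃ φ : V → C,
      Multiset.map φ (Finset.univ : Finset V).val ≤ 𝒞 ∧
      ∀ u v : V, K.Adj u v → φ u ≠ φ v := by
  classical
  obtain ⟨x, -⟩ := Finset.card_pos.1 (by omega : 0 < 𝒞.toFinset.card)
  have : Nonempty C := ⟨x⟩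
  have himg : (Finset.univ.image K.connectedComponentMk).card = Nat.card K.ConnectedComponent := by
    have hsurj : Function.Surjective K.connectedComponentMk := Quot.mk_surjective
    rw [Finset.image_univ_of_surjective hsurj, Finset.card_univ,
      Nat.card_eq_fintype_card]
  have hle : (Finset.univ.image K.connectedComponentMk).card ≤ Fintype.card V :=
    Finset.card_image_le
  obtain ⟨T, hT, hTc⟩ := Finset.exists_subset_card_eq hcolors
  have hTM : T.val ≤ 𝒞 :=
    (Finset.val_le_iff.2 hT).trans (Multiset.dedup_le 𝒞)
  have hc : (𝒞 - T.val).card = 𝒞.card - T.card := Multiset.card_sub hTM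
  obtain ⟨N, hN, hNc⟩ := aux_sub (𝒞 - T.val) (Fintype.card V - T.card) (by omega)
  have hM : T.val + N ≤ 𝒞 := by
    calc T.val + N ≤ T.val + (𝒞 - T.val) := by gcongr
      _ = 𝒞 := add_tsub_cancel_of_le hTM
  have hsub : T ⊆ (T.val + N).toFinset := by
    intro y hy
    rw [Multiset.mem_toFinset, Multiset.mem_add]
    exact Or.inl hy
  have := Finset.card_le_card hsub
  obtain ⟨φ, h1, h2⟩ := aux_main K.connectedComponentMk (Fintype.card V) Finset.univ (T.val + N)
    Finset.card_univ (by rw [Multiset.card_add, hNc, Finset.card_val]; omega)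
    (Or.inl (by omega))
  refine ⟨φ, h1 ▸ hM, fun u v huv => h2 u (Finset.mem_univ _) v (Finset.mem_univ _) huv.ne ?_⟩
  exact SimpleGraph.ConnectedComponent.eq.2 huv.reachable
end

section
/- Let Y ⊆ ℂ^{n+1} be the common zero set of a (possibly empty) family of homogeneous polynomials each of which is invariant. Let ℓ ≥ 1 and let g be a homogeneous polynomial of degree ℓ whose restriction to Y is not S_{n+1}-invariant, i.e. there exist τ ∈ S_{n+1} and y ∈ Y with (τ·g)(y) ≠ g(y). Let K be a finite simple graph on the vertex set {0, …, n}. Then there exist a finite simple graph K′ on {0, …, n} containing K as a subgraph with c(K′) ≥ c(K) − 1, and a homogeneous polynomial g′ of degree ℓ − 1 whose restriction to Y is not identically zero, such that Bs(f_K · g) ⊆ Bs(f_{K′} · g′). -/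
open MvPolynomial

/-- `Bs h` is the common zero set in `ℂ^{n+1}` of all the `S_{n+1}`-translates of the
polynomial `h`, where `S_{n+1}` acts by permuting the variables. -/
def Bs {n : ℕ} (h : MvPolynomial (Fin (n + 1)) ℂ) : Set (Fin (n + 1) → ℂ) :=
  {p | ∀ σ : Equiv.Perm (Fin (n + 1)), eval p (rename (⇑σ) h) = 0}

open scoped Classical in
/-- For a finite simple graph `K` on the vertex set `{0,…,n}`, `fK K` is the product
`∏_{{i,j} ∈ E(K)} (x_i − x_j)`, with one factor per edge, each edge ordered so that
`i < j` (a fixed choice of ordering of each edge). -/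
noncomputable def fK {n : ℕ} (K : SimpleGraph (Fin (n + 1))) :
    MvPolynomial (Fin (n + 1)) ℂ :=
  ∏ p ∈ Finset.univ.filter
      (fun p : Fin (n + 1) × Fin (n + 1) => K.Adj p.1 p.2 ∧ p.1 < p.2),
    (X p.1 - X p.2)

theorem eval_fK_ne_zero {n : ℕ} (K : SimpleGraph (Fin (n + 1))) (q : Fin (n + 1) → ℂ) :
    eval q (fK K) ≠ 0 ↔ ∀ a b, K.Adj a b → q a ≠ q b := by
  classical
  unfold fK
  rw [map_prod, Finset.prod_ne_zero_iff]
  simp only [Finset.mem_filter, Finset.mem_univ, true_and, map_sub, eval_X, sub_ne_zero]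
  constructor
  · intro h a b hab
    rcases lt_trichotomy a b with hlt | heq | hlt
    · exact h (a, b) ⟨hab, hlt⟩
    · exact absurd heq hab.ne
    · exact (h (b, a) ⟨hab.symm, hlt⟩).symm
  · intro h p hp
    exact h _ _ hp.1

theorem swap_dvd {n : ℕ} (i j : Fin (n + 1)) (g : MvPolynomial (Fin (n + 1)) ℂ) :
    (X i - X j : MvPolynomial (Fin (n + 1)) ℂ) ∣ g - rename (⇑(Equiv.swap i j)) g := by
  rw [← Ideal.mem_span_singleton, ← Ideal.Quotient.eq]
  set I := Ideal.span {(X i - X j : MvPolynomial (Fin (n + 1)) ℂ)} with hI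
  have hij : Ideal.Quotient.mk I (X i) = Ideal.Quotient.mk I (X j) := by
    rw [Ideal.Quotient.eq, hI, Ideal.mem_span_singleton]
  have key : (Ideal.Quotient.mkₐ ℂ I) =
      (Ideal.Quotient.mkₐ ℂ I).comp (rename (⇑(Equiv.swap i j))) := by
    apply MvPolynomial.algHom_ext
    intro a
    simp only [AlgHom.comp_apply, rename_X, Ideal.Quotient.mkₐ_eq_mk]
    by_cases h1 : a = i
    · subst h1; simpa using hij
    · by_cases h2 : a = j
      · subst h2; simpa using hij.symm
      · rw [Equiv.swap_apply_of_ne_of_ne h1 h2]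
  exact DFunLike.congr_fun key g

theorem hom_factor {n : ℕ} (i j : Fin (n + 1)) (ℓ : ℕ) (hℓ : 1 ≤ ℓ)
    (h q : MvPolynomial (Fin (n + 1)) ℂ) (hh : h.IsHomogeneous ℓ) (e : h = (X i - X j) * q) :
    h = (X i - X j) * homogeneousComponent (ℓ - 1) q := by
  classical
  letI : GradedAlgebra (homogeneousSubmodule (Fin (n + 1)) ℂ) := MvPolynomial.gradedAlgebra
  have hx : (X i - X j : MvPolynomial (Fin (n + 1)) ℂ) ∈
      homogeneousSubmodule (Fin (n + 1)) ℂ 1 :=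
    Submodule.sub_mem _ (isHomogeneous_X _ _) (isHomogeneous_X _ _)
  have h1 := DirectSum.coe_decompose_mul_add_of_left_mem
    (homogeneousSubmodule (Fin (n + 1)) ℂ) (j := ℓ - 1) (b := q) hx
  rw [← e, Nat.add_sub_cancel' hℓ, DirectSum.decompose_of_mem_same _ hh] at h1
  rw [h1]
  congr 1
  exact decomposition.decompose'_apply q (ℓ - 1)

theorem card_comp {n : ℕ} (K K' : SimpleGraph (Fin (n + 1))) (i j : Fin (n + 1))
    (hK : ∀ a b, K'.Adj a b → K.Adj a b ∨ K.Adj (Equiv.swap i j a) (Equiv.swap i j b) ∨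
      (a = i ∧ b = j) ∨ (a = j ∧ b = i)) :
    Nat.card K.ConnectedComponent - 1 ≤ Nat.card K'.ConnectedComponent := by
  classical
  let c : Fin (n + 1) → K.ConnectedComponent := K.connectedComponentMk
  let φ : Fin (n + 1) → K.ConnectedComponent := fun v => if c v = c j then c i else c v
  have hc : ∀ a b, K.Adj a b → c a = c b := fun a b h =>
    SimpleGraph.ConnectedComponent.connectedComponentMk_eq_of_adj h
  have hs : ∀ a, φ (Equiv.swap i j a) = φ a := by
    intro a
    by_cases h1 : a = i
    · subst h1; simp [φ]
    · by_cases h2 : a = j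
      · subst h2; simp [φ]
      · rw [Equiv.swap_apply_of_ne_of_ne h1 h2]
  have hcφ : ∀ a b, c a = c b → φ a = φ b := fun a b h => by simp only [φ, h]
  have hadj : ∀ a b, K'.Adj a b → φ a = φ b := by
    intro a b h
    rcases hK a b h with h | h | ⟨rfl, rfl⟩ | ⟨rfl, rfl⟩
    · exact hcφ _ _ (hc _ _ h)
    · rw [← hs a, ← hs b]; exact hcφ _ _ (hc _ _ h)
    · simp [φ]
    · simp [φ]
  have hreach : ∀ a b, K'.Reachable a b → φ a = φ b := by
    rintro a b ⟨w⟩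
    induction w with
    | nil => rfl
    | cons h _ ih => exact (hadj _ _ h).trans ih
  let Φ : K'.ConnectedComponent → K.ConnectedComponent :=
    fun d => φ d.exists_rep.choose
  have hΦ : ∀ v, Φ (K'.connectedComponentMk v) = φ v := fun v =>
    hreach _ _ (SimpleGraph.ConnectedComponent.exact
      (K'.connectedComponentMk v).exists_rep.choose_spec)
  have hsub : (Finset.univ.erase (c j)) ⊆ Finset.univ.image Φ := by
    intro d hd
    induction d using SimpleGraph.ConnectedComponent.ind with
    | h v =>
      have hv : c v ≠ c j := (Finset.mem_erase.1 hd).1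
      refine Finset.mem_image.2 ⟨K'.connectedComponentMk v, Finset.mem_univ _, ?_⟩
      rw [hΦ]
      exact if_neg hv
  have := (Finset.card_le_card hsub).trans Finset.card_image_le
  rw [Finset.card_erase_of_mem (Finset.mem_univ _)] at this
  simpa [Nat.card_eq_fintype_card] using this

/-- Lemma 4.6: given an intersection `Y` of invariant hypersurfaces, a homogeneous
polynomial `g` of degree `ℓ ≥ 1` whose restriction to `Y` is not `S_{n+1}`-invariant,
and a graph `K` on `{0,…,n}`, there exist a graph `K' ⊇ K` with
`c(K') ≥ c(K) − 1` and a homogeneous polynomial `g'` of degree `ℓ − 1` not vanishing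
identically on `Y` with `Bs(f_K · g) ⊆ Bs(f_{K'} · g')`. -/
theorem stmt_2 (n : ℕ) (hn : 1 ≤ n)
    (F : Set (MvPolynomial (Fin (n + 1)) ℂ))
    (hF : ∀ f ∈ F, (∃ k : ℕ, f.IsHomogeneous k) ∧
      ∀ σ : Equiv.Perm (Fin (n + 1)), rename (⇑σ) f = f)
    (Y : Set (Fin (n + 1) → ℂ)) (hY : Y = {p | ∀ f ∈ F, eval p f = 0})
    (ℓ : ℕ) (hℓ : 1 ≤ ℓ)
    (g : MvPolynomial (Fin (n + 1)) ℂ) (hg : g.IsHomogeneous ℓ)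
    (hgni : ∃ τ : Equiv.Perm (Fin (n + 1)), ∃ y ∈ Y,
      eval y (rename (⇑τ) g) ≠ eval y g)
    (K : SimpleGraph (Fin (n + 1))) :
    ∃ (K' : SimpleGraph (Fin (n + 1))) (g' : MvPolynomial (Fin (n + 1)) ℂ),
      K ≤ K' ∧
      Nat.card K.ConnectedComponent - 1 ≤ Nat.card K'.ConnectedComponent ∧
      g'.IsHomogeneous (ℓ - 1) ∧
      (∃ y ∈ Y, eval y g' ≠ 0) ∧
      Bs (fK K * g) ⊆ Bs (fK K' * g') := by
  classical
  have hYp : ∀ y ∈ Y, ∀ σ : Equiv.Perm (Fin (n + 1)), (y ∘ σ) ∈ Y := by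
    intro y hy σ
    rw [hY] at hy ⊢
    intro f hf
    rw [← eval_rename, (hF f hf).2 σ]
    exact hy f hf
  obtain ⟨i, j, hij, y, hy, hne⟩ : ∃ i j, i ≠ j ∧ ∃ y ∈ Y,
      eval (y ∘ Equiv.swap i j) g ≠ eval y g := by
    by_contra! hcon
    obtain ⟨τ, y, hy, hne⟩ := hgni
    apply hne
    rw [eval_rename]
    clear hne
    induction τ using Equiv.Perm.swap_induction_on generalizing y with
    | one => rfl
    | swap_mul f a b hab ih =>
      have := ih (y ∘ Equiv.swap a b) (hYp y hy _)
      rw [hcon a b hab y hy] at this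
      exact this
  obtain ⟨q, hq⟩ := swap_dvd i j g
  have hhom : (g - rename (⇑(Equiv.swap i j)) g).IsHomogeneous ℓ :=
    hg.sub hg.rename_isHomogeneous
  have hq' := hom_factor i j ℓ hℓ _ q hhom hq
  set g' := homogeneousComponent (ℓ - 1) q with hg'
  have hev : ∀ z, eval z g - eval (z ∘ Equiv.swap i j) g = (z i - z j) * eval z g' := by
    intro z
    have := congrArg (eval z) hq'
    simpa [eval_rename] using this
  refine ⟨K ⊔ K.comap (Equiv.swap i j) ⊔ SimpleGraph.edge i j, g',
    le_sup_left.trans le_sup_left, ?_, homogeneousComponent_isHomogeneous _ _, ⟨y, hy, ?_⟩, ?_⟩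
  · apply card_comp K _ i j
    intro a b h
    simp only [SimpleGraph.sup_adj, SimpleGraph.comap_adj, SimpleGraph.edge_adj] at h
    tauto
  · intro h0
    have := hev y
    rw [h0, mul_zero, sub_eq_zero] at this
    exact hne this.symm
  · intro p hp σ
    rw [eval_rename]
    set z := p ∘ σ with hz
    by_contra hcon
    rw [map_mul, mul_eq_zero, not_or] at hcon
    obtain ⟨h1, h2⟩ := hcon
    rw [← ne_eq, eval_fK_ne_zero] at h1
    have e1 := hp σ
    have e2 := hp (σ * Equiv.swap i j)
    rw [eval_rename, map_mul] at e1 e2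
    have hz2 : p ∘ ⇑(σ * Equiv.swap i j) = z ∘ Equiv.swap i j := rfl
    rw [hz2] at e2
    have n1 : eval z (fK K) ≠ 0 := (eval_fK_ne_zero K z).2 fun a b hab =>
      h1 a b (Or.inl (Or.inl hab))
    have n2 : eval (z ∘ Equiv.swap i j) (fK K) ≠ 0 := (eval_fK_ne_zero K _).2 fun a b hab =>
      h1 _ _ (Or.inl (Or.inr (by simpa [SimpleGraph.comap_adj] using hab)))
    have n3 : z i ≠ z j := h1 i j (Or.inr (by simp [SimpleGraph.edge_adj, hij]))
    have z1 := (mul_eq_zero.1 e1).resolve_left n1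
    have z2 := (mul_eq_zero.1 e2).resolve_left n2
    have := hev z
    rw [z1, z2, sub_zero] at this
    exact (mul_ne_zero (sub_ne_zero.2 n3) h2) this.symm
end

section
/- Let Y ⊆ ℂ^{n+1} be the common zero set of a (possibly empty) family of homogeneous polynomials each of which is invariant. Let m ≥ 0 and let f be a homogeneous polynomial of degree m whose restriction to Y is not identically zero. Then there exist an integer r with 0 ≤ r ≤ m, a finite simple graph K on {0, …, n} with c(K) ≥ n + 1 − r, and an invariant homogeneous polynomial g_0 of degree m − r whose restriction to Y is not identically zero, such that Bs(f) ∩ Y ⊆ Bs(f_K · g_0). -/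
open MvPolynomial

/-- `p` separates the blocks of the coloring `c`. -/
def SepBlk {n : ℕ} (c : Fin (n + 1) → Fin (n + 1)) (p : Fin (n + 1) → ℂ) : Prop :=
  ∀ a b, a ≠ b → c a = c b → p a ≠ p b

lemma swap_dvd_aux {n : ℕ} (i j : Fin (n + 1)) (h : MvPolynomial (Fin (n + 1)) ℂ) :
    (X i - X j : MvPolynomial (Fin (n + 1)) ℂ) ∣ h - rename (⇑(Equiv.swap i j)) h := by
  rw [← Ideal.mem_span_singleton, ← Ideal.Quotient.eq]
  set I : Ideal (MvPolynomial (Fin (n + 1)) ℂ) := Ideal.span {X i - X j} with hI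
  have hij : Ideal.Quotient.mk I (X i) = Ideal.Quotient.mk I (X j) := by
    rw [Ideal.Quotient.eq]; exact Ideal.mem_span_singleton_self _
  have key : (Ideal.Quotient.mkₐ ℂ I) =
      (Ideal.Quotient.mkₐ ℂ I).comp (rename (⇑(Equiv.swap i j))) := by
    apply MvPolynomial.algHom_ext
    intro k
    simp only [AlgHom.comp_apply, rename_X, Ideal.Quotient.mkₐ_eq_mk]
    rcases eq_or_ne k i with rfl | hki
    · simpa using hij
    rcases eq_or_ne k j with rfl | hkj
    · simpa using hij.symm
    rw [Equiv.swap_apply_of_ne_of_ne hki hkj]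
  exact DFunLike.congr_fun key h

lemma divdiff {n : ℕ} (i j : Fin (n + 1)) (m : ℕ) (h : MvPolynomial (Fin (n + 1)) ℂ)
    (hh : h.IsHomogeneous (m + 1)) :
    ∃ q : MvPolynomial (Fin (n + 1)) ℂ, q.IsHomogeneous m ∧
      h - rename (⇑(Equiv.swap i j)) h = (X i - X j) * q := by
  obtain ⟨q, hq⟩ := swap_dvd_aux i j h
  refine ⟨homogeneousComponent m q, homogeneousComponent_isHomogeneous m q, ?_⟩
  have h1 : (h - rename (⇑(Equiv.swap i j)) h).IsHomogeneous (m + 1) :=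
    hh.sub (hh.rename_isHomogeneous)
  have hX : (X i - X j : MvPolynomial (Fin (n + 1)) ℂ).IsHomogeneous 1 :=
    (isHomogeneous_X _ _).sub (isHomogeneous_X _ _)
  have h2 : homogeneousComponent (m + 1) ((X i - X j) * q) =
      (X i - X j) * homogeneousComponent m q := by
    conv_lhs => rw [← sum_homogeneousComponent q, Finset.mul_sum, map_sum]
    have : ∀ k ∈ Finset.range (q.totalDegree + 1),
        homogeneousComponent (m + 1) ((X i - X j) * homogeneousComponent k q) =
        if k = m then (X i - X j) * homogeneousComponent m q else 0 := by
      intro k _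
      have hk := hX.mul (homogeneousComponent_isHomogeneous k q)
      rw [homogeneousComponent_of_mem hk]
      by_cases hkm : k = m
      · subst hkm; simp [add_comm]
      · rw [if_neg hkm, if_neg (by omega)]
    rw [Finset.sum_congr rfl this, Finset.sum_ite_eq']
    split_ifs with hm
    · rfl
    · rw [homogeneousComponent_eq_zero, mul_zero]
      simp at hm; omega
  rw [← h2, ← hq, homogeneousComponent_of_mem h1, if_pos rfl]

lemma main_ind {n : ℕ} (Y W : Set (Fin (n + 1) → ℂ))
    (hW : ∀ p ∈ W, ∀ σ : Equiv.Perm (Fin (n + 1)), p ∘ σ ∈ W)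
    (hYs : ∀ p ∈ Y, ∀ σ : Equiv.Perm (Fin (n + 1)), p ∘ σ ∈ Y) (m : ℕ) :
    ∀ (h : MvPolynomial (Fin (n + 1)) ℂ) (c : Fin (n + 1) → Fin (n + 1)),
      h.IsHomogeneous m → (∃ y ∈ Y, eval y h ≠ 0) →
      (∀ p ∈ W, SepBlk c p → eval p h = 0) →
      ∃ (k : ℕ) (h' : MvPolynomial (Fin (n + 1)) ℂ) (c' : Fin (n + 1) → Fin (n + 1)),
        k ≤ m ∧ h'.IsHomogeneous k ∧ (∃ y ∈ Y, eval y h' ≠ 0) ∧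
        (∀ p ∈ W, SepBlk c' p → eval p h' = 0) ∧
        (Finset.univ.image c).card ≤ (Finset.univ.image c').card + (m - k) ∧
        ∀ σ : Equiv.Perm (Fin (n + 1)), ∀ y ∈ Y, eval (y ∘ σ) h' = eval y h' := by
  induction m with
  | zero =>
    intro h c hh hne hv
    refine ⟨0, h, c, le_rfl, hh, hne, hv, by simp, ?_⟩
    intro σ y _
    have : h = C (coeff 0 h) := by
      apply totalDegree_eq_zero_iff_eq_C.1
      exact Nat.le_zero.1 hh.totalDegree_le
    rw [this]; simp
  | succ m ih =>
    intro h c hh hne hv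
    by_cases H : ∀ i j, ∀ y ∈ Y, eval (y ∘ Equiv.swap i j) h = eval y h
    · refine ⟨m + 1, h, c, le_rfl, hh, hne, hv, by simp, ?_⟩
      intro σ
      induction σ using Equiv.Perm.swap_induction_on with
      | one => intro y _; simp
      | swap_mul f i j _ ihf =>
        intro y hy
        rw [Equiv.Perm.coe_mul, ← Function.comp_assoc, ihf _ (hYs y hy _), H i j y hy]
    · push Not at H
      obtain ⟨i, j, y, hy, hne'⟩ := H
      obtain ⟨q, hq, hqe⟩ := divdiff i j m h hh
      have hev : ∀ p : Fin (n + 1) → ℂ,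
          eval p h - eval (p ∘ Equiv.swap i j) h = (p i - p j) * eval p q := by
        intro p
        have := congrArg (eval p) hqe
        simpa [eval_rename] using this
      let c1 : Fin (n + 1) → Fin (n + 1) := fun a => if c a = c i then c j else c a
      have hc1 : ∀ a b, c a = c b → c1 a = c1 b := by
        intro a b hab; simp only [c1, hab]
      have hc1s : ∀ a, c1 (Equiv.swap i j a) = c1 a := by
        have e : c1 i = c1 j := by simp [c1]
        intro a
        rcases eq_or_ne a i with rfl | hai
        · simp [e]
        rcases eq_or_ne a j with rfl | haj
        · simp [e]
        rw [Equiv.swap_apply_of_ne_of_ne hai haj]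
      have hij : i ≠ j := by
        rintro rfl; simp at hne'
      obtain ⟨k, h', c', hk, h1, h2, h3, h4, h5⟩ := ih q c1 hq
        ⟨y, hy, fun h0 => hne' (by have := hev y; rw [h0, mul_zero, sub_eq_zero] at this; exact this.symm)⟩
        (by
          intro p hp hs
          have e1 : eval p h = 0 := hv p hp fun a b hab hc => hs a b hab (hc1 a b hc)
          have e2 : eval (p ∘ Equiv.swap i j) h = 0 := by
            refine hv _ (hW p hp _) fun a b hab hc => ?_
            refine hs _ _ (fun e => hab ((Equiv.swap i j).injective e)) ?_
            rw [hc1s, hc1s]; exact hc1 a b hc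
          have := hev p
          rw [e1, e2, sub_zero] at this
          have hp' : p i - p j ≠ 0 := sub_ne_zero.2 (hs i j hij (by simp [c1]))
          exact (mul_eq_zero.1 this.symm).resolve_left hp')
      refine ⟨k, h', c', by omega, h1, h2, h3, ?_, h5⟩
      have hcard : (Finset.univ.image c).card ≤ (Finset.univ.image c1).card + 1 := by
        have : Finset.univ.image c ⊆ insert (c i) (Finset.univ.image c1) := by
          intro x hx
          obtain ⟨a, -, rfl⟩ := Finset.mem_image.1 hx
          by_cases hca : c a = c i
          · simp [hca]
          · refine Finset.mem_insert_of_mem (Finset.mem_image.2 ⟨a, Finset.mem_univ _, ?_⟩)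
            simp [c1, hca]
        exact (Finset.card_le_card this).trans (Finset.card_insert_le _ _)
      omega

/-- union of cliques on the blocks of `c` -/
def blkGraph {n : ℕ} (c : Fin (n + 1) → Fin (n + 1)) : SimpleGraph (Fin (n + 1)) where
  Adj a b := a ≠ b ∧ c a = c b
  symm := ⟨fun _ _ h => ⟨h.1.symm, h.2.symm⟩⟩
  loopless := ⟨fun _ h => h.1 rfl⟩

lemma blkGraph_card {n : ℕ} (c : Fin (n + 1) → Fin (n + 1)) :
    (Finset.univ.image c).card ≤ Nat.card (blkGraph c).ConnectedComponent := by
  have hr : ∀ v w, (blkGraph c).Reachable v w → c v = c w := by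
    rintro v w ⟨p⟩
    induction p with
    | nil => rfl
    | cons hadj _ ih => exact hadj.2.trans ih
  let φ : (blkGraph c).ConnectedComponent → (Finset.univ.image c) :=
    SimpleGraph.ConnectedComponent.lift (fun v => ⟨c v, by simp⟩)
      (fun v w p _ => Subtype.ext (hr v w ⟨p⟩))
  have hs : Function.Surjective φ := by
    rintro ⟨x, hx⟩
    obtain ⟨a, -, rfl⟩ := Finset.mem_image.1 hx
    exact ⟨(blkGraph c).connectedComponentMk a, rfl⟩
  have := Nat.card_le_card_of_surjective φ hs
  rwa [Nat.card_eq_fintype_card, Fintype.card_coe] at this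

lemma sep_of_fK {n : ℕ} (c : Fin (n + 1) → Fin (n + 1)) (p : Fin (n + 1) → ℂ)
    (h : eval p (fK (blkGraph c)) ≠ 0) : SepBlk c p := by
  classical
  intro a b hab hc he
  apply h
  unfold fK
  rw [map_prod]
  rcases lt_or_gt_of_ne hab with hlt | hlt
  · refine Finset.prod_eq_zero (i := (a, b)) ?_ (by simp [he])
    exact Finset.mem_filter.2 ⟨Finset.mem_univ _, ⟨hab, hc⟩, hlt⟩
  · refine Finset.prod_eq_zero (i := (b, a)) ?_ (by simp [he])
    exact Finset.mem_filter.2 ⟨Finset.mem_univ _, ⟨hab.symm, hc.symm⟩, hlt⟩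

/-- Corollary 4.7: given an intersection `Y` of invariant hypersurfaces and a
homogeneous polynomial `f` of degree `m` not vanishing identically on `Y`, there exist
`0 ≤ r ≤ m`, a graph `K` on `{0,…,n}` with `c(K) ≥ n + 1 − r`, and an invariant
homogeneous polynomial `g₀` of degree `m − r` not vanishing identically on `Y` such
that `Bs(f) ∩ Y ⊆ Bs(f_K · g₀)`. -/
theorem stmt_3 (n : ℕ) (hn : 1 ≤ n)
    (F : Set (MvPolynomial (Fin (n + 1)) ℂ))
    (hF : ∀ f ∈ F, (∃ k : ℕ, f.IsHomogeneous k) ∧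
      ∀ σ : Equiv.Perm (Fin (n + 1)), rename (⇑σ) f = f)
    (Y : Set (Fin (n + 1) → ℂ)) (hY : Y = {p | ∀ f ∈ F, eval p f = 0})
    (m : ℕ) (f : MvPolynomial (Fin (n + 1)) ℂ) (hf : f.IsHomogeneous m)
    (hf0 : ∃ y ∈ Y, eval y f ≠ 0) :
    ∃ r : ℕ, r ≤ m ∧
      ∃ (K : SimpleGraph (Fin (n + 1))) (g₀ : MvPolynomial (Fin (n + 1)) ℂ),
        n + 1 - r ≤ Nat.card K.ConnectedComponent ∧
        (∀ σ : Equiv.Perm (Fin (n + 1)), rename (⇑σ) g₀ = g₀) ∧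
        g₀.IsHomogeneous (m - r) ∧
        (∃ y ∈ Y, eval y g₀ ≠ 0) ∧
        Bs f ∩ Y ⊆ Bs (fK K * g₀) := by
  have hYs : ∀ p ∈ Y, ∀ σ : Equiv.Perm (Fin (n + 1)), p ∘ σ ∈ Y := by
    intro p hp σ
    rw [hY] at hp ⊢
    intro g hg
    rw [← eval_rename, (hF g hg).2 σ]
    exact hp g hg
  have hBs : ∀ p ∈ Bs f, ∀ σ : Equiv.Perm (Fin (n + 1)), p ∘ σ ∈ Bs f := by
    intro p hp σ τ
    have := hp (σ * τ)
    rw [eval_rename] at this ⊢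
    exact this
  obtain ⟨k, h, c, hk, hh, ⟨y, hy, hne⟩, hv, hcard, hinv⟩ := main_ind Y (Bs f ∩ Y)
    (fun p hp σ => ⟨hBs p hp.1 σ, hYs p hp.2 σ⟩) hYs m f id hf hf0
    (fun p hp _ => by simpa using hp.1 1)
  let N : ℂ := (Fintype.card (Equiv.Perm (Fin (n + 1))) : ℂ)
  have hN : N ≠ 0 := Nat.cast_ne_zero.2 Fintype.card_ne_zero
  let g : MvPolynomial (Fin (n + 1)) ℂ := ∑ σ : Equiv.Perm (Fin (n + 1)), rename (⇑σ) h
  have hg : ∀ z ∈ Y, eval z g = N * eval z h := by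
    intro z hz
    simp only [g, map_sum, eval_rename]
    rw [Finset.sum_congr rfl (fun σ _ => hinv σ z hz)]
    simp [N]
  refine ⟨m - k, Nat.sub_le _ _, blkGraph c, g, ?_, ?_, ?_, ⟨y, hy, ?_⟩, ?_⟩
  · have := blkGraph_card c
    simp only [Finset.image_id, Finset.card_univ, Fintype.card_fin] at hcard
    omega
  · intro σ
    simp only [g, map_sum, rename_rename]
    exact Fintype.sum_equiv (Equiv.mulLeft σ) _ _ (fun τ => rfl)
  · rw [Nat.sub_sub_self hk]
    exact IsHomogeneous.sum _ _ _ (fun σ _ => hh.rename_isHomogeneous)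
  · rw [hg y hy]; exact mul_ne_zero hN hne
  · rintro p ⟨hp, hpY⟩ σ
    rw [eval_rename, map_mul, mul_eq_zero, or_iff_not_imp_left]
    intro h0
    rw [hg _ (hYs p hpY σ), hv _ ⟨hBs p hp σ, hYs p hpY σ⟩ (sep_of_fK c _ h0), mul_zero]
end

section
/- Let m ≥ 1 and let M be a nonzero linear subspace of the space of homogeneous polynomials of degree m in ℂ[x_0,…,x_n] that is invariant under the S_{n+1}-action permuting the variables. Let B = {p ∈ ℂ^{n+1} : f(p) = 0 for all f ∈ M} and let Z be an irreducible component of B for the Zariski topology. Then at least one of the following holds: (1) there is a nonempty Zariski-open subset of Z at each of whose points the n+1 coordinates take at most m distinct values, and the affine dimension of Z is at most m (equivalently, dim Z ≤ m − 1 as a subvariety of ℙ^n); or (2) Z is an irreducible component of the common zero set of finitely many homogeneous polynomials, each invariant under all permutations of the variables and each of degree at most m, and the affine dimension of Z is at least n + 1 − m (equivalently, dim Z ≥ n − m as a subvariety of ℙ^n). -/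
open MvPolynomial

/-- The Zariski topology on `ℂ^{n+1}`: the topology generated by the complements of
hypersurfaces; its closed sets are exactly the common zero sets of families of
polynomials. -/
def zariski (n : ℕ) : TopologicalSpace (Fin (n + 1) → ℂ) :=
  TopologicalSpace.generateFrom
    {U | ∃ f : MvPolynomial (Fin (n + 1)) ℂ, U = {p | eval p f ≠ 0}}

/-- `Z` is an irreducible component of `B` (for the Zariski topology): `Z` is maximal
among the irreducible subsets of `B`. -/
def IsIrredComponentOf (n : ℕ) (Z B : Set (Fin (n + 1) → ℂ)) : Prop :=
  Maximal (fun s : Set (Fin (n + 1) → ℂ) => s ⊆ B ∧ @IsIrreducible _ (zariski n) s) Z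

/-- The (affine, Krull) dimension of a subset of `ℂ^{n+1}` with the topology induced
from the Zariski topology. -/
noncomputable def zDim (n : ℕ) (s : Set (Fin (n + 1) → ℂ)) : WithBot ℕ∞ :=
  @topologicalKrullDim s (TopologicalSpace.induced Subtype.val (zariski n))

set_option linter.style.haveILetI false


noncomputable def stairSub (N k : ℕ) : Submodule ℂ (MvPolynomial (Fin N) ℂ) :=
  restrictSupport ℂ {a | (∀ i : Fin N, a i + (i : ℕ) < N) ∧ a.degree < k}

lemma mem_stairSub {N k : ℕ} {r : MvPolynomial (Fin N) ℂ} :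
    r ∈ stairSub N k ↔ ∀ a ∈ r.support, (∀ i : Fin N, a i + (i : ℕ) < N) ∧ a.degree < k := by
  rfl

lemma stairSub_mono {N k l : ℕ} (h : k ≤ l) : stairSub N k ≤ stairSub N l := by
  intro r hr a ha
  have := hr ha
  exact ⟨this.1, this.2.trans_le h⟩

lemma stairSub_zero {N : ℕ} {r : MvPolynomial (Fin N) ℂ} (h : r ∈ stairSub N 0) : r = 0 := by
  rw [← support_eq_empty, Finset.eq_empty_iff_forall_notMem]
  intro a ha
  exact absurd (mem_stairSub.1 h a ha).2 (by simp)

lemma stair_coeff {N k : ℕ} {r : MvPolynomial (Fin (N+1)) ℂ} (hr : r ∈ stairSub (N+1) k) (j : ℕ) :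
    (finSuccEquiv ℂ N r).coeff j ∈ stairSub N (k - j) := by
  rw [mem_stairSub]
  intro a ha
  rw [mem_support_coeff_finSuccEquiv] at ha
  have h := mem_stairSub.1 hr _ ha
  constructor
  · intro i
    have := h.1 i.succ
    simp at this
    omega
  · have h2 := h.2
    rw [Finsupp.degree_eq_sum, Fin.sum_univ_succ] at h2
    simp at h2
    rw [Finsupp.degree_eq_sum]
    omega

lemma stair_natDegree {N k : ℕ} {r : MvPolynomial (Fin (N+1)) ℂ} (hr : r ∈ stairSub (N+1) k) :
    (finSuccEquiv ℂ N r).natDegree < N + 1 := by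
  rw [Nat.lt_succ_iff, Polynomial.natDegree_le_iff_coeff_eq_zero]
  intro j hj
  rw [← support_eq_empty, Finset.eq_empty_iff_forall_notMem]
  intro a ha
  rw [mem_support_coeff_finSuccEquiv] at ha
  have h := (mem_stairSub.1 hr _ ha).1 0
  simp at h
  omega

lemma stair_eval {N k : ℕ} {P : Polynomial (MvPolynomial (Fin N) ℂ)}
    (hP : ∀ j, P.coeff j ∈ stairSub N (k - j)) (u : ℂ) : P.eval (C u) ∈ stairSub N k := by
  rw [Polynomial.eval_eq_sum_range]
  refine Submodule.sum_mem _ fun j _ => ?_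
  rw [← map_pow, mul_comm, ← smul_eq_C_mul]
  exact Submodule.smul_mem _ _ (stairSub_mono (by omega) (hP j))

lemma stair_div {N k : ℕ} {P : Polynomial (MvPolynomial (Fin N) ℂ)}
    (hP : ∀ j, P.coeff j ∈ stairSub N (k - j)) (u : ℂ) (j : ℕ) :
    (P /ₘ (Polynomial.X - Polynomial.C (C u))).coeff j ∈ stairSub N (k - 1 - j) := by
  rw [Polynomial.coeff_divByMonic_X_sub_C]
  refine Submodule.sum_mem _ fun i hi => ?_
  rw [← map_pow, ← smul_eq_C_mul]
  simp at hi
  exact Submodule.smul_mem _ _ (stairSub_mono (by omega) (hP i))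

lemma map_univ_cons {N : ℕ} (v : ℂ) (q : Fin N → ℂ) :
    (Finset.univ.val.map (Fin.cons v q : Fin (N+1) → ℂ)) = v ::ₘ Finset.univ.val.map q := by
  simp [Fin.univ_succ, Multiset.map_map, Function.comp_def]

lemma eval_cons_eq {N : ℕ} (v : ℂ) (q : Fin N → ℂ) (r : MvPolynomial (Fin (N+1)) ℂ) :
    eval (Fin.cons v q : Fin (N+1) → ℂ) r = eval q ((finSuccEquiv ℂ N r).eval (C v)) := by
  rw [eval_eq_eval_mv_eval', Polynomial.eval_map, Polynomial.eval, Polynomial.hom_eval₂]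
  simp

lemma stair_indep (N : ℕ) : ∀ (k : ℕ) (s : Multiset ℂ) (r : MvPolynomial (Fin N) ℂ),
    s.card = N → (k ≤ s.toFinset.card ∨ s.Nodup) → r ∈ stairSub N k →
    (∀ q : Fin N → ℂ, Finset.univ.val.map q = s → eval q r = 0) → r = 0 := by
  induction N with
  | zero =>
    intro k s r hs _ _ h
    have := h Fin.elim0 (by rw [Multiset.card_eq_zero] at hs; simp [hs])
    rw [eq_C_of_isEmpty r] at this ⊢
    simp at this
    simp [this]
  | succ N ih =>
    intro k s r hs hk hr h
    have hvan : ∀ v ∈ s, ∀ q : Fin N → ℂ, Finset.univ.val.map q = s.erase v →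
        eval q ((finSuccEquiv ℂ N r).eval (C v)) = 0 := by
      intro v hv q hq
      rw [← eval_cons_eq]
      apply h
      rw [map_univ_cons, hq, Multiset.cons_erase hv]
    have hcard : ∀ v ∈ s, (s.erase v).card = N := by
      intro v hv
      rw [Multiset.card_erase_of_mem hv, hs]; rfl
    suffices hz : finSuccEquiv ℂ N r = 0 by simpa using hz
    by_cases hnd : s.Nodup
    · apply Polynomial.eq_zero_of_natDegree_lt_card_of_eval_eq_zero' _ (s.toFinset.image C)
      · intro c hc
        simp only [Finset.mem_image, Multiset.mem_toFinset] at hc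
        obtain ⟨v, hv, rfl⟩ := hc
        exact ih k _ _ (hcard v hv) (Or.inr (hnd.erase v)) (stair_eval (stair_coeff hr) v)
          (hvan v hv)
      · rw [Finset.card_image_of_injective _ (C_injective _ _), Multiset.toFinset_card_of_nodup hnd, hs]
        exact stair_natDegree hr
    · have hk : k ≤ s.toFinset.card := by tauto
      obtain ⟨u, hu⟩ : ∃ u, 1 < s.count u := by
        rw [Multiset.nodup_iff_count_le_one] at hnd
        push Not at hnd
        exact hnd
      have hus : u ∈ s := Multiset.count_pos.1 (by omega)
      have hroot : (finSuccEquiv ℂ N r).eval (C u) = 0 := by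
        refine ih k _ _ (hcard u hus) (Or.inl ?_) (stair_eval (stair_coeff hr) u) (hvan u hus)
        refine hk.trans (Finset.card_le_card ?_)
        intro v hv
        rw [Multiset.mem_toFinset] at hv ⊢
        by_cases hvu : v = u
        · subst hvu
          rw [← Multiset.count_pos, Multiset.count_erase_self]; omega
        · rwa [Multiset.mem_erase_of_ne hvu]
      set P := finSuccEquiv ℂ N r with hPdef
      have hfac : (Polynomial.X - Polynomial.C (C u)) * (P /ₘ (Polynomial.X - Polynomial.C (C u))) = P :=
        Polynomial.mul_divByMonic_eq_iff_isRoot.2 hroot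
      set P' := P /ₘ (Polynomial.X - Polynomial.C (C u)) with hP'
      have hc' : ∀ j, P'.coeff j ∈ stairSub N (k - 1 - j) := stair_div (stair_coeff hr) u
      suffices P' = 0 by rw [← hfac, this, mul_zero]
      by_cases hk1 : k ≤ 1
      · ext1 j
        apply stairSub_zero
        have := hc' j
        rwa [show k - 1 - j = 0 by omega] at this
      apply Polynomial.eq_zero_of_natDegree_lt_card_of_eval_eq_zero' _ ((s.toFinset.erase u).image C)
      · intro c hc
        simp only [Finset.mem_image, Multiset.mem_toFinset, Finset.mem_erase] at hc
        obtain ⟨v, ⟨hvu, hv⟩, rfl⟩ := hc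
        refine ih (k-1) (s.erase v) _ (hcard v hv) (Or.inl ?_) (stair_eval hc' v) ?_
        · have : s.toFinset.erase v ⊆ (s.erase v).toFinset := by
            intro w hw
            simp only [Finset.mem_erase, Multiset.mem_toFinset] at hw ⊢
            rw [Multiset.mem_erase_of_ne hw.1]; exact hw.2
          have h2 := Finset.card_le_card this
          rw [Finset.card_erase_of_mem (by simpa using hv)] at h2
          omega
        · intro q hq
          have h3 := hvan v hv q hq
          rw [← hfac, Polynomial.eval_mul, map_mul] at h3
          simp only [Polynomial.eval_sub, Polynomial.eval_X, Polynomial.eval_C, map_sub, eval_C] at h3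
          rcases mul_eq_zero.1 h3 with h4 | h4
          · exact absurd (sub_eq_zero.1 h4) hvu
          · exact h4
      · rw [Finset.card_image_of_injective _ (C_injective _ _),
          Finset.card_erase_of_mem (by simpa using hus)]
        have : P'.natDegree ≤ k - 2 := by
          rw [Polynomial.natDegree_le_iff_coeff_eq_zero]
          intro j hj
          apply stairSub_zero
          have := hc' j
          rwa [show k - 1 - j = 0 by omega] at this
        omega


noncomputable def tailPoly (N i : ℕ) : Polynomial (MvPolynomial (Fin N) ℂ) :=
  ∏ j ∈ Finset.univ.filter (fun j : Fin N => i ≤ (j : ℕ)), (Polynomial.X - Polynomial.C (X j))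

lemma tailPoly_monic (N i : ℕ) : (tailPoly N i).Monic :=
  Polynomial.monic_prod_of_monic _ _ fun j _ => Polynomial.monic_X_sub_C _

lemma tailPoly_natDegree (N i : ℕ) : (tailPoly N i).natDegree = N - i := by
  rw [tailPoly, Polynomial.natDegree_prod_of_monic _ _ fun j _ => Polynomial.monic_X_sub_C _]
  simp only [Polynomial.natDegree_X_sub_C, Finset.sum_const, smul_eq_mul, mul_one]
  have h1 := Finset.card_filter_add_card_filter_not (s := (Finset.univ : Finset (Fin N))) (fun j : Fin N => (j : ℕ) < i)
  simp only [not_lt, Fin.card_filter_val_lt, Finset.card_univ, Fintype.card_fin] at h1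
  omega
  
lemma tailPoly_succ (N : ℕ) (i : Fin N) : 
    tailPoly N i = (Polynomial.X - Polynomial.C (X i)) * tailPoly N (i+1) := by
  rw [tailPoly, tailPoly, ← Finset.prod_insert (f := fun j => Polynomial.X - Polynomial.C (X j : MvPolynomial (Fin N) ℂ))]
  · congr 1
    ext j
    simp only [Finset.mem_filter, Finset.mem_univ, true_and, Finset.mem_insert, Fin.ext_iff]
    omega
  · simp

lemma tailPoly_zero_symm (N k : ℕ) : ((tailPoly N 0).coeff k).IsSymmetric := by
  intro σ
  have : (tailPoly N 0).map (rename σ : MvPolynomial (Fin N) ℂ →ₐ[ℂ] _).toRingHom = tailPoly N 0 := by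
    simp [tailPoly, Polynomial.map_prod]
    exact Equiv.prod_comp σ (fun j => Polynomial.X - Polynomial.C (X j : MvPolynomial (Fin N) ℂ))
  conv_rhs => rw [← this]
  rw [Polynomial.coeff_map]
  rfl

def stairSet (N i : ℕ) : Set (Fin N →₀ ℕ) :=
  {a | ∀ j : Fin N, a j + (j : ℕ) < N ∧ (i ≤ (j : ℕ) → a j = 0)}

lemma tower (N i : ℕ) (hi : i ≤ N) : ∃ T : Subalgebra ℂ (MvPolynomial (Fin N) ℂ), 
    (∀ j : Fin N, (j : ℕ) < i → X j ∈ T) ∧ (∀ k, (tailPoly N i).coeff k ∈ T) ∧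
    ∀ f ∈ T, f ∈ Submodule.span (symmetricSubalgebra (Fin N) ℂ)
      ((fun a => monomial a (1:ℂ)) '' stairSet N i) := by
  induction i with
  | zero => 
    refine ⟨symmetricSubalgebra (Fin N) ℂ, by simp, tailPoly_zero_symm N, ?_⟩
    intro f hf
    have h1 : (1 : MvPolynomial (Fin N) ℂ) ∈ Submodule.span (symmetricSubalgebra (Fin N) ℂ)
      ((fun a => monomial a (1:ℂ)) '' stairSet N 0) := 
      Submodule.subset_span ⟨0, by intro j; simp, by simp⟩
    have := Submodule.smul_mem _ (⟨f, hf⟩ : symmetricSubalgebra (Fin N) ℂ) h1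
    rw [Subalgebra.smul_def] at this
    simpa using this
  | succ i ih =>
    obtain ⟨T, hX, hQ, hT⟩ := ih (by omega)
    let i' : Fin N := ⟨i, by omega⟩
    refine ⟨(Algebra.adjoin T {(X i' : MvPolynomial (Fin N) ℂ)}).restrictScalars ℂ, ?_, ?_, ?_⟩
    · intro j hj
      rw [Subalgebra.mem_restrictScalars]
      by_cases hji : (j : ℕ) = i
      · obtain rfl : j = i' := Fin.ext hji
        exact Algebra.subset_adjoin rfl
      · exact Subalgebra.algebraMap_mem _ (⟨X j, hX j (by omega)⟩ : T)
    · intro k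
      rw [Subalgebra.mem_restrictScalars]
      have : tailPoly N (i+1) = tailPoly N i /ₘ (Polynomial.X - Polynomial.C (X i')) := by
        rw [show tailPoly N i = _ from tailPoly_succ N i', Polynomial.mul_divByMonic_cancel_left _ (Polynomial.monic_X_sub_C _)]
      rw [this, Polynomial.coeff_divByMonic_X_sub_C]
      refine Subalgebra.sum_mem _ fun l _ => Subalgebra.mul_mem _ (Subalgebra.pow_mem _ ?_ _) ?_
      · exact Algebra.subset_adjoin rfl
      · exact Subalgebra.algebraMap_mem _ (⟨_, hQ l⟩ : T)
    · intro f hf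
      rw [Subalgebra.mem_restrictScalars, Algebra.adjoin_singleton_eq_range_aeval] at hf
      obtain ⟨P, rfl⟩ := hf
      obtain ⟨Q, hQmap, hQdeg, hQmon⟩ := Polynomial.lifts_and_natDegree_eq_and_monic 
        (f := algebraMap T (MvPolynomial (Fin N) ℂ)) (p := tailPoly N i) (by
          rw [Polynomial.lifts_iff_coeff_lifts]
          intro k
          exact ⟨⟨_, hQ k⟩, rfl⟩) (tailPoly_monic N i)
      have hroot : Polynomial.aeval (X i' : MvPolynomial (Fin N) ℂ) Q = 0 := by
        rw [Polynomial.aeval_def, ← Polynomial.eval_map, hQmap, show tailPoly N i = _ from tailPoly_succ N i']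
        simp
      show Polynomial.aeval (X i' : MvPolynomial (Fin N) ℂ) P ∈ _
      rw [← Polynomial.aeval_modByMonic_eq_self_of_root hroot, Polynomial.aeval_eq_sum_range]
      have hlt : (P %ₘ Q).natDegree < N - i := by
        rw [← tailPoly_natDegree, ← hQdeg]
        apply Polynomial.natDegree_modByMonic_lt _ hQmon
        rintro rfl
        rw [Polynomial.natDegree_one, tailPoly_natDegree] at hQdeg
        omega
      refine Submodule.sum_mem _ fun k hk => ?_
      have hk' : k < N - i := by rw [Finset.mem_range] at hk; omega
      have hc := hT _ ((P %ₘ Q).coeff k).2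
      rw [Subalgebra.smul_def, smul_eq_mul]
      generalize (((P %ₘ Q).coeff k : T) : MvPolynomial (Fin N) ℂ) = c at hc
      induction hc using Submodule.span_induction with
      | mem x hx => 
        obtain ⟨a, ha, rfl⟩ := hx
        apply Submodule.subset_span
        refine ⟨a + Finsupp.single i' k, ?_, ?_⟩
        · intro j
          have := ha j
          by_cases hji : j = i'
          · subst hji
            have h0 := this.2 (le_refl _)
            simp only [Finsupp.add_apply, h0, Finsupp.single_eq_same, i']
            omega
          · have : (j : ℕ) ≠ i := fun h => hji (Fin.ext h)
            simp only [Finsupp.add_apply, Finsupp.single_eq_of_ne hji]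
            refine ⟨by omega, fun h => ?_⟩
            rw [(ha j).2 (by omega), add_zero]
        · simp [X_pow_eq_monomial, monomial_mul]
      | zero => simp
      | add x y _ _ hx hy => rw [add_mul]; exact Submodule.add_mem _ hx hy
      | smul r x _ hx => rw [smul_mul_assoc]; exact Submodule.smul_mem _ _ hx

/-- normal form -/
lemma normal_form (N m : ℕ) (f : MvPolynomial (Fin N) ℂ) (hf : f.IsHomogeneous m) :
    ∃ (A : Finset (Fin N →₀ ℕ)) (F : (Fin N →₀ ℕ) → MvPolynomial (Fin N) ℂ),
      (∀ a ∈ A, (∀ i : Fin N, a i + (i : ℕ) < N) ∧ a.degree < m + 1) ∧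
      (∀ a, (F a).IsSymmetric ∧ (F a).IsHomogeneous (m - a.degree)) ∧
      f = ∑ a ∈ A, F a * monomial a 1 := by
  classical
  obtain ⟨T, hX, -, hT⟩ := tower N N le_rfl
  have htop : T = ⊤ := by
    rw [eq_top_iff, ← MvPolynomial.adjoin_range_X]
    apply Algebra.adjoin_le
    rintro _ ⟨j, rfl⟩
    exact hX j j.2
  have hfs := hT f (by rw [htop]; trivial)
  rw [Finsupp.mem_span_image_iff_linearCombination] at hfs
  obtain ⟨l, hl, hlf⟩ := hfs
  refine ⟨l.support.filter (fun a => a.degree < m + 1), fun a => homogeneousComponent (m - a.degree) (l a : MvPolynomial (Fin N) ℂ), ?_, ?_, ?_⟩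
  · intro a ha
    rw [Finset.mem_filter] at ha
    exact ⟨fun i => (hl ha.1 i).1, ha.2⟩
  · intro a
    refine ⟨fun σ => ?_, homogeneousComponent_isHomogeneous _ _⟩
    rw [rename_homogeneousComponent]
    congr 1
    exact (l a).2 σ
  · have h1 : f = homogeneousComponent m f := by
      rw [homogeneousComponent_of_mem hf]; simp
    rw [Finsupp.linearCombination_apply, Finsupp.sum] at hlf
    rw [h1, ← hlf, map_sum, Finset.sum_filter]
    refine Finset.sum_congr rfl fun a _ => ?_
    rw [Subalgebra.smul_def, smul_eq_mul]
    beta_reduce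
    generalize (l a : MvPolynomial (Fin N) ℂ) = g
    ext b
    rw [coeff_homogeneousComponent]
    split_ifs with h2 h3 h3
    · rw [coeff_mul_monomial', coeff_mul_monomial']
      split_ifs with h4
      · rw [coeff_homogeneousComponent, if_pos]
        have : b.degree = (b - a).degree + a.degree := by
          rw [← map_add, tsub_add_cancel_of_le h4]
        omega
      · rfl
    · rw [coeff_mul_monomial', if_neg]
      · simp
      · intro h4
        have : b.degree = (b - a).degree + a.degree := by
          rw [← map_add, tsub_add_cancel_of_le h4]
        omega
    · rw [coeff_mul_monomial']
      split_ifs with h4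
      · rw [coeff_homogeneousComponent, if_neg, zero_mul]
        have : b.degree = (b - a).degree + a.degree := by
          rw [← map_add, tsub_add_cancel_of_le h4]
        omega
      · rfl
    · simp


lemma esymm_homog (N i : ℕ) : (esymm (Fin N) ℂ i).IsHomogeneous i := by
  rw [esymm]
  refine IsHomogeneous.sum _ _ _ fun t ht => ?_
  have := IsHomogeneous.prod t (fun i => (X i : MvPolynomial (Fin N) ℂ)) (fun _ => 1) (fun i _ => isHomogeneous_X _ _)
  simpa [(Finset.mem_powersetCard.1 ht).2] using this

lemma sym_fiber (N m k : ℕ) (hk : k ≤ m) (F : MvPolynomial (Fin N) ℂ) (hs : F.IsSymmetric)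
    (hF : F.IsHomogeneous k) (p q : Fin N → ℂ)
    (h : ∀ i : Fin m, eval p (esymm (Fin N) ℂ (i + 1)) = eval q (esymm (Fin N) ℂ (i + 1))) :
    eval p F = eval q F := by
  obtain ⟨Φ, hΦ⟩ := esymmAlgHom_fin_surjective (R := ℂ) (le_refl N) ⟨F, hs⟩
  have h1 : F = aeval (fun i : Fin N => esymm (Fin N) ℂ (i + 1)) Φ := by
    have := congrArg Subtype.val hΦ
    rw [← show _ = F from this, esymmAlgHom]
    rw [← Subalgebra.coe_val, ← AlgHom.comp_apply, comp_aeval]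
    rfl
  have h2 : F = homogeneousComponent k F := by
    rw [homogeneousComponent_of_mem hF]; simp
  rw [h2, h1, aeval_def, eval₂_eq, map_sum, map_sum, map_sum]
  refine Finset.sum_congr rfl fun b _ => ?_
  rw [algebraMap_eq, homogeneousComponent_C_mul]
  have hhom : (∏ i ∈ b.support, esymm (Fin N) ℂ (i + 1) ^ b i).IsHomogeneous (∑ i ∈ b.support, ((i : ℕ) + 1) * b i) :=
    IsHomogeneous.prod _ _ _ fun i _ => (esymm_homog N (i+1)).pow (b i)
  rw [homogeneousComponent_of_mem hhom]
  split_ifs with h3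
  · simp only [map_mul, map_prod, map_pow, eval_C]
    congr 1
    refine Finset.prod_congr rfl fun i hi => ?_
    have : (i : ℕ) < m := by
      have h4 := Finset.single_le_sum (f := fun i : Fin N => ((i : ℕ) + 1) * b i) (fun _ _ => Nat.zero_le _) hi
      have h5 : 1 ≤ b i := Nat.one_le_iff_ne_zero.2 (Finsupp.mem_support_iff.1 hi)
      have h6 := Nat.le_mul_of_pos_right ((i : ℕ) + 1) h5
      omega
    rw [h ⟨i, this⟩]
  · simp

lemma height_max (N : ℕ) : ∀ (P : Ideal (MvPolynomial (Fin N) ℂ)), P.IsMaximal → P.height = N := by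
  induction N with
  | zero =>
    intro P hP
    have h1 := Ideal.height_le_ringKrullDim_of_ne_top hP.ne_top
    rw [MvPolynomial.ringKrullDim_of_isNoetherianRing, ringKrullDim_eq_zero_of_field] at h1
    simp at h1
    simpa using h1
  | succ N ih =>
    intro P hP
    let e := (finSuccEquiv ℂ N).toRingEquiv
    have hmax : (P.map e).IsMaximal := Ideal.map_isMaximal_of_equiv e
    have h2 : ((P.map e).under (MvPolynomial (Fin N) ℂ)).IsMaximal := 
       Polynomial.isMaximal_comap_C_of_isJacobsonRing (P.map e) 
    haveI : (P.map e).LiesOver ((P.map e).under (MvPolynomial (Fin N) ℂ)) := ⟨rfl⟩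
    have h3 := Polynomial.height_eq_height_add_one ((P.map e).under (MvPolynomial (Fin N) ℂ)) (P.map e)
    rw [ih _ h2, RingEquiv.height_map] at h3
    rw [h3]; simp
lemma zar_basis (n : ℕ) : @TopologicalSpace.IsTopologicalBasis _ (zariski n)
    {U | ∃ f : MvPolynomial (Fin (n + 1)) ℂ, U = {p | eval p f ≠ 0}} := by
  letI := zariski n
  refine ⟨?_, ?_, rfl⟩
  · rintro _ ⟨f, rfl⟩ _ ⟨g, rfl⟩ x hx
    refine ⟨_, ⟨f * g, rfl⟩, ?_, ?_⟩
    · simpa using hx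
    · intro y hy
      simpa using hy
  · rw [Set.eq_univ_iff_forall]
    intro x
    exact ⟨_, ⟨1, rfl⟩, by simp⟩

lemma zar_sep (n : ℕ) {U : Set (Fin (n + 1) → ℂ)} (hU : (zariski n).IsOpen U)
    {p : Fin (n + 1) → ℂ} (hp : p ∈ U) :
    ∃ f : MvPolynomial (Fin (n + 1)) ℂ, eval p f ≠ 0 ∧ ∀ x, eval x f ≠ 0 → x ∈ U := by
  letI := zariski n
  obtain ⟨_, ⟨f, rfl⟩, h1, h2⟩ := (zar_basis n).exists_subset_of_mem_open hp hU
  exact ⟨f, h1, h2⟩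

lemma zar_open (n : ℕ) (f : MvPolynomial (Fin (n + 1)) ℂ) :
    (zariski n).IsOpen {p | eval p f ≠ 0} :=
  TopologicalSpace.GenerateOpen.basic _ ⟨f, rfl⟩

lemma zar_closed (n : ℕ) (S : Set (MvPolynomial (Fin (n + 1)) ℂ)) :
    @IsClosed _ (zariski n) {p | ∀ f ∈ S, eval p f = 0} := by
  letI := zariski n
  have : {p : Fin (n+1) → ℂ | ∀ f ∈ S, eval p f = 0} = ⋂ f ∈ S, {p | eval p f ≠ 0}ᶜ := by
    ext p; simp
  rw [this]
  exact isClosed_biInter fun f _ => isClosed_compl_iff.2 (zar_open n f)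

lemma mem_van {N : ℕ} {V : Set (Fin N → ℂ)} {f : MvPolynomial (Fin N) ℂ} :
    f ∈ vanishingIdeal ℂ V ↔ ∀ x ∈ V, eval x f = 0 := by
  simp [mem_vanishingIdeal_iff, aeval_eq_eval]

lemma mem_zl {N : ℕ} {I : Ideal (MvPolynomial (Fin N) ℂ)} {x : Fin N → ℂ} :
    x ∈ zeroLocus ℂ I ↔ ∀ f ∈ I, eval x f = 0 := by
  simp [mem_zeroLocus_iff, aeval_eq_eval]

lemma irr_prime (n : ℕ) {Z : Set (Fin (n + 1) → ℂ)} (hZ : @IsIrreducible _ (zariski n) Z) :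
    (vanishingIdeal ℂ Z : Ideal (MvPolynomial (Fin (n+1)) ℂ)).IsPrime := by
  letI := zariski n
  constructor
  · intro h
    have h1 : (1 : MvPolynomial (Fin (n+1)) ℂ) ∈ vanishingIdeal ℂ Z := by rw [h]; trivial
    obtain ⟨x, hx⟩ := hZ.1
    simpa using mem_van.1 h1 x hx
  · intro f g hfg
    by_contra hcon
    push Not at hcon
    simp only [mem_van] at hcon hfg
    push Not at hcon
    obtain ⟨⟨x, hx, hfx⟩, ⟨y, hy, hgy⟩⟩ := hcon
    obtain ⟨z, hz, h1, h2⟩ := hZ.2 _ _ (zar_open n f) (zar_open n g) ⟨x, hx, hfx⟩ ⟨y, hy, hgy⟩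
    have := hfg z hz
    rw [map_mul] at this
    rcases mul_eq_zero.1 this with h | h
    exacts [h1 h, h2 h]

lemma prime_van {N : ℕ} {P : Ideal (MvPolynomial (Fin N) ℂ)} (hP : P.IsPrime) :
    vanishingIdeal ℂ (zeroLocus ℂ P) = P := IsPrime.vanishingIdeal_zeroLocus P

lemma prime_irr (n : ℕ) {P : Ideal (MvPolynomial (Fin (n+1)) ℂ)} (hP : P.IsPrime) :
    @IsIrreducible _ (zariski n) (zeroLocus ℂ P) := by
  letI := zariski n
  constructor
  · by_contra h
    rw [Set.not_nonempty_iff_eq_empty] at h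
    have := prime_van hP
    rw [h, vanishingIdeal_empty] at this
    exact hP.ne_top this.symm
  · rintro U V hU hV ⟨x, hx, hxU⟩ ⟨y, hy, hyV⟩
    obtain ⟨f, hf, hfU⟩ := zar_sep n hU hxU
    obtain ⟨g, hg, hgV⟩ := zar_sep n hV hyV
    have hf' : f ∉ P := fun h => hf (mem_zl.1 hx f h)
    have hg' : g ∉ P := fun h => hg (mem_zl.1 hy g h)
    have hfg : f * g ∉ P := fun h => (hP.mem_or_mem h).elim hf' hg'
    rw [← prime_van hP, mem_van] at hfg
    push Not at hfg
    obtain ⟨z, hz, hz2⟩ := hfg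
    rw [map_mul] at hz2
    exact ⟨z, hz, hfU z (left_ne_zero_of_mul hz2), hgV z (right_ne_zero_of_mul hz2)⟩

lemma zl_closed (n : ℕ) (P : Ideal (MvPolynomial (Fin (n+1)) ℂ)) :
    @IsClosed _ (zariski n) (zeroLocus ℂ P) := by
  have := zar_closed n (P : Set (MvPolynomial (Fin (n+1)) ℂ))
  convert this using 1
  ext x; exact mem_zl

lemma comp_closed (n : ℕ) {Z B : Set (Fin (n + 1) → ℂ)} (hB : @IsClosed _ (zariski n) B)
    (hZ : IsIrredComponentOf n Z B) : @IsClosed _ (zariski n) Z := by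
  letI := zariski n
  have h1 : closure Z ⊆ Z := hZ.2 ⟨closure_minimal hZ.1.1 hB, hZ.1.2.closure⟩ subset_closure
  exact isClosed_of_closure_subset h1

lemma closed_zl (n : ℕ) {Z : Set (Fin (n + 1) → ℂ)} (hZ : @IsClosed _ (zariski n) Z) :
    zeroLocus ℂ (vanishingIdeal ℂ Z : Ideal (MvPolynomial (Fin (n+1)) ℂ)) = Z := by
  letI := zariski n
  refine Set.Subset.antisymm ?_ (zeroLocus_vanishingIdeal_le _)
  intro x hx
  by_contra hxZ
  obtain ⟨f, hf, hfU⟩ := zar_sep n (hZ.isOpen_compl) hxZ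
  refine hf (mem_zl.1 hx f (mem_van.2 fun y hy => ?_))
  by_contra h
  exact hfU y h hy

lemma dim_upper (n m : ℕ) (Z : Set (Fin (n + 1) → ℂ)) (c : Fin (n+1) → Fin m)
    (hc : ∀ p ∈ Z, ∀ i j, c i = c j → p i = p j) : zDim n Z ≤ (m : ℕ∞) := by
  letI := zariski n
  classical
  have hdim : ringKrullDim (MvPolynomial (Fin m) ℂ) = (m : ℕ∞) := by
    rw [MvPolynomial.ringKrullDim_of_isNoetherianRing, ringKrullDim_eq_zero_of_field]
    simp
  rw [← hdim]
  show Order.krullDim (TopologicalSpace.IrreducibleCloseds Z) ≤ Order.krullDim _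
  rw [← Order.krullDim_orderDual]
  let s : Fin m → Fin (n+1) := fun k => if h : ∃ i, c i = k then h.choose else 0
  have hs : ∀ i, c (s (c i)) = c i := by
    intro i
    have h : ∃ i', c i' = c i := ⟨i, rfl⟩
    simp only [s, dif_pos h]
    exact h.choose_spec
  have hev : ∀ p ∈ Z, ∀ f : MvPolynomial (Fin (n+1)) ℂ, eval p (rename s (rename c f)) = eval p f := by
    intro p hp f
    rw [rename_rename, eval_rename]
    congr 2
    ext i
    exact hc p hp _ _ (hs i)
  have hpr : ∀ C : TopologicalSpace.IrreducibleCloseds Z, 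
      ((vanishingIdeal ℂ (Subtype.val '' (C : Set Z)) : Ideal (MvPolynomial (Fin (n+1)) ℂ)).comap 
        (rename s : MvPolynomial (Fin m) ℂ →ₐ[ℂ] _)).IsPrime := by
    intro C
    have := irr_prime n (C.isIrreducible'.image Subtype.val continuous_subtype_val.continuousOn)
    exact Ideal.IsPrime.comap _
  suffices key : ∀ C' D' : TopologicalSpace.IrreducibleCloseds Z, D' < C' →
      (⟨_, hpr C'⟩ : PrimeSpectrum _) < ⟨_, hpr D'⟩ from
    Order.krullDim_le_of_strictMono
      (fun C : (TopologicalSpace.IrreducibleCloseds Z)ᵒᵈ =>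
        (⟨_, hpr (OrderDual.ofDual C)⟩ : PrimeSpectrum _)) fun C D h => key _ _ h
  intro C' D' hCD
  refine lt_of_le_not_ge ?_ ?_
  · intro f hf
    simp only [Ideal.mem_comap, mem_van] at hf ⊢
    rintro _ ⟨x, hx, rfl⟩
    exact hf _ ⟨x, hCD.le hx, rfl⟩
  · intro hle
    obtain ⟨x, hxC, hxD⟩ := Set.exists_of_ssubset (show (D' : Set Z) ⊂ C' from hCD)
    obtain ⟨K, hK, hKD⟩ := isClosed_induced_iff.1 D'.isClosed'
    have hxK : x.1 ∈ Kᶜ := by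
      intro h
      exact hxD (by show x ∈ D'.carrier; rw [← hKD]; exact h)
    obtain ⟨f, hf, hfU⟩ := zar_sep n hK.isOpen_compl hxK
    have h1 : rename c f ∈ (vanishingIdeal ℂ (Subtype.val '' (D' : Set Z)) : Ideal (MvPolynomial (Fin (n+1)) ℂ)).comap 
        (rename s : MvPolynomial (Fin m) ℂ →ₐ[ℂ] _) := by
      simp only [Ideal.mem_comap, mem_van]
      rintro _ ⟨y, hy, rfl⟩
      show eval y.1 (rename s (rename c f)) = 0
      rw [hev _ y.2]
      by_contra h
      refine hfU _ h ?_
      change y ∈ D'.carrier at hy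
      rw [← hKD] at hy
      exact hy
    have h2 := hle h1
    simp only [Ideal.mem_comap, mem_van] at h2
    have h3 := h2 x.1 ⟨x, hxC, rfl⟩
    change eval x.1 (rename s (rename c f)) = 0 at h3
    rw [hev _ x.2] at h3
    exact hf h3

lemma sub_aux {α : Type*} {Z A B : Set α} (hA : A ⊆ Z)
    (h : (Subtype.val ⁻¹' A : Set Z) ⊆ Subtype.val ⁻¹' B) : A ⊆ B := by
  intro x hx
  have h5 : (⟨x, hA hx⟩ : Z) ∈ (Subtype.val ⁻¹' A : Set Z) := hx
  exact h h5

lemma dim_lower (n m : ℕ) (Z : Set (Fin (n + 1) → ℂ))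
    (fs : Finset (MvPolynomial (Fin (n + 1)) ℂ))
    (hfs : ∀ f ∈ fs, f.IsSymmetric ∧ ∃ k ≤ m, f.IsHomogeneous k)
    (hZ : IsIrredComponentOf n Z {p | ∀ f ∈ fs, eval p f = 0}) :
    ((n + 1 - m : ℕ) : ℕ∞) ≤ zDim n Z := by
  letI := zariski n
  classical
  have hVcl : IsClosed {p : Fin (n+1) → ℂ | ∀ f ∈ fs, eval p f = 0} := zar_closed n (fs : Set _)
  have hZcl := comp_closed n hVcl hZ
  set q : Ideal (MvPolynomial (Fin (n+1)) ℂ) := vanishingIdeal ℂ Z with hq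
  have hqp : q.IsPrime := irr_prime n hZ.1.2
  set J : Ideal (MvPolynomial (Fin (n+1)) ℂ) := Ideal.span (fs : Set _) with hJ
  have hJq : J ≤ q := by
    rw [hJ, Ideal.span_le]
    intro f hf
    exact mem_van.2 fun x hx => hZ.1.1 hx f hf
  have hVJ : ∀ P : Ideal (MvPolynomial (Fin (n+1)) ℂ), J ≤ P →
      zeroLocus ℂ P ⊆ {p : Fin (n+1) → ℂ | ∀ f ∈ fs, eval p f = 0} := by
    intro P hP x hx f hf
    exact mem_zl.1 hx f (hP (Ideal.subset_span hf))
  have hqmin : ∀ P : Ideal (MvPolynomial (Fin (n+1)) ℂ), P.IsPrime → J ≤ P → P ≤ q → P = q := by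
    intro P hP hJP hPq
    refine le_antisymm hPq ?_
    have h1 : Z ⊆ zeroLocus ℂ P := by
      rw [← closed_zl n hZcl]
      exact zeroLocus_anti_mono hPq
    have h2 : zeroLocus ℂ P ⊆ Z := hZ.2 ⟨hVJ P hJP, prime_irr n hP⟩ h1
    rw [← prime_van hP]
    exact vanishingIdeal_anti_mono h2
  -- a polynomial in the other minimal primes
  obtain ⟨g, hgq, hg⟩ : ∃ g, g ∉ q ∧ ∀ P ∈ J.minimalPrimes, P ≠ q → g ∈ P := by
    have hfin := J.finite_minimalPrimes_of_isNoetherianRing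
    have hch : ∀ P : Ideal (MvPolynomial (Fin (n+1)) ℂ), ∃ g, g ∉ q ∧
        (P ∈ J.minimalPrimes → P ≠ q → g ∈ P) := by
      intro P
      by_cases h : P ∈ J.minimalPrimes ∧ P ≠ q
      · have : ¬ P ≤ q := fun hle => h.2 (hqmin P h.1.1.1 h.1.1.2 hle)
        obtain ⟨g, hg1, hg2⟩ := Set.not_subset.1 this
        exact ⟨g, hg2, fun _ _ => hg1⟩
      · refine ⟨1, fun h1 => hqp.ne_top ((Ideal.eq_top_iff_one _).2 h1), fun h1 h2 => absurd ⟨h1, h2⟩ h⟩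
    choose G hG1 hG2 using hch
    refine ⟨∏ P ∈ hfin.toFinset, G P, ?_, ?_⟩
    · rw [hqp.prod_mem_iff]
      rintro ⟨P, _, hP⟩
      exact hG1 P hP
    · intro P hP hPq
      exact Ideal.mem_of_dvd _ (Finset.dvd_prod_of_mem _ (hfin.mem_toFinset.2 hP)) (hG2 P hP hPq)
  obtain ⟨z, hzZ, hgz⟩ : ∃ z ∈ Z, eval z g ≠ 0 := by
    rw [hq, mem_van] at hgq
    push Not at hgq
    exact hgq
  set mz : Ideal (MvPolynomial (Fin (n+1)) ℂ) := vanishingIdeal ℂ {z} with hmz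
  have hmax : mz.IsMaximal := isMaximal_iff_eq_vanishingIdeal_singleton.2 ⟨z, rfl⟩
  let S : Set (MvPolynomial (Fin (n+1)) ℂ) :=
    Set.range fun i : Fin m => esymm (Fin (n+1)) ℂ (i + 1) - C (eval z (esymm (Fin (n+1)) ℂ (i + 1)))
  have hS : S ⊆ mz := by
    rintro _ ⟨i, rfl⟩
    rw [SetLike.mem_coe, hmz, mem_van]
    rintro x rfl
    simp
  have hht := Ideal.height_le_height_add_encard_of_subset S hS
  rw [height_max _ _ hmax] at hht
  have hScard : S.encard ≤ m := by
    have := Set.encard_le_encard (s := S) (t := S) le_rfl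
    calc S.encard = (Set.range fun i : Fin m => esymm (Fin (n+1)) ℂ (i + 1) - C (eval z (esymm (Fin (n+1)) ℂ (i + 1)))).encard := rfl
      _ ≤ (Set.univ : Set (Fin m)).encard := by
        rw [← Set.image_univ]; exact Set.encard_image_le _ _
      _ = m := by simp
  have hht2 : ((n + 1 - m : ℕ) : ℕ∞) ≤ (mz.map (Ideal.Quotient.mk (Ideal.span S))).height := by
    have h1 := hht.trans (add_le_add_right hScard _)
    generalize (mz.map (Ideal.Quotient.mk (Ideal.span S))).height = h at h1 ⊢
    induction h using ENat.recTopCoe with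
    | top => simp
    | coe h => norm_cast at h1 ⊢; omega
  have hmp : (mz.map (Ideal.Quotient.mk (Ideal.span S))).IsPrime :=
    Ideal.isPrime_map_quotientMk_of_isPrime (Ideal.span_le.2 hS)
  have key : ∀ P : Ideal (MvPolynomial (Fin (n+1)) ℂ), P.IsPrime → Ideal.span S ≤ P → P ≤ mz →
      zeroLocus ℂ P ⊆ Z := by
    intro P hP hSP hPm
    have hJP : J ≤ P := by
      rw [hJ, Ideal.span_le]
      intro F hF
      rw [SetLike.mem_coe, ← prime_van hP, mem_van]
      intro x hx
      obtain ⟨hsym, k, hk, hhom⟩ := hfs F hF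
      rw [sym_fiber (n+1) m k hk F hsym hhom x z, hZ.1.1 hzZ F hF]
      intro i
      have := mem_zl.1 hx _ (hSP (Ideal.subset_span ⟨i, rfl⟩))
      simpa [sub_eq_zero] using this
    obtain ⟨P', hP', hle⟩ := Ideal.exists_minimalPrimes_le hJP
    have : P' = q := by
      by_contra hne
      have := hPm (hle (hg P' hP' hne))
      rw [hmz, mem_van] at this
      exact hgz (this z rfl)
    rw [← closed_zl n hZcl, ← hq, ← this]
    exact zeroLocus_anti_mono hle
  have hcast : (((n + 1 - m : ℕ) : ℕ∞) : WithBot ℕ∞) ≤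
      ((mz.map (Ideal.Quotient.mk (Ideal.span S))).height : WithBot ℕ∞) := by
    exact_mod_cast hht2
  refine hcast.trans ?_
  let x0 : PrimeSpectrum (MvPolynomial (Fin (n+1)) ℂ ⧸ Ideal.span S) := ⟨_, hmp⟩
  rw [show (mz.map (Ideal.Quotient.mk (Ideal.span S))).height = Order.height x0 from
    PrimeSpectrum.height_eq_orderHeight x0, Order.height_eq_krullDim_Iic]
  show _ ≤ Order.krullDim (TopologicalSpace.IrreducibleCloseds Z)
  rw [← Order.krullDim_orderDual (α := TopologicalSpace.IrreducibleCloseds Z)]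
  let cm : Set.Iic x0 → Ideal (MvPolynomial (Fin (n+1)) ℂ) := fun P =>
    P.1.asIdeal.comap (Ideal.Quotient.mk (Ideal.span S))
  have hcp : ∀ P, (cm P).IsPrime := fun P => by
    have := P.1.isPrime
    exact Ideal.IsPrime.comap _
  have hcS : ∀ P, Ideal.span S ≤ cm P := by
    intro P f hf
    show Ideal.Quotient.mk _ f ∈ P.1.asIdeal
    rw [Ideal.Quotient.eq_zero_iff_mem.2 hf]
    exact Ideal.zero_mem _
  have hcm : ∀ P, cm P ≤ mz := by
    intro P f hf
    have h1 : Ideal.Quotient.mk _ f ∈ x0.asIdeal := P.2 hf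
    have h2 : f ∈ (mz.map (Ideal.Quotient.mk (Ideal.span S))).comap (Ideal.Quotient.mk (Ideal.span S)) := h1
    rwa [Ideal.comap_map_of_surjective' _ Ideal.Quotient.mk_surjective, Ideal.mk_ker,
      sup_eq_left.2 (Ideal.span_le.2 hS)] at h2
  have hsub : ∀ P, zeroLocus ℂ (cm P) ⊆ Z := fun P => key _ (hcp P) (hcS P) (hcm P)
  have hirr : ∀ P, IsIrreducible (Subtype.val ⁻¹' (zeroLocus ℂ (cm P)) : Set Z) := by
    intro P
    have h1 := prime_irr n (hcp P)
    constructor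
    · obtain ⟨x, hx⟩ := h1.1
      exact ⟨⟨x, hsub P hx⟩, hx⟩
    · rintro _ _ ⟨U, hU, rfl⟩ ⟨V, hV, rfl⟩ ⟨x, hx, hxU⟩ ⟨y, hy, hyV⟩
      obtain ⟨w, hw, hwU, hwV⟩ := h1.2 U V hU hV ⟨x.1, hx, hxU⟩ ⟨y.1, hy, hyV⟩
      exact ⟨⟨w, hsub P hw⟩, hw, hwU, hwV⟩
  let φ : Set.Iic x0 → TopologicalSpace.IrreducibleCloseds Z := fun P =>
    ⟨_, hirr P, (zl_closed n (cm P)).preimage continuous_subtype_val⟩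
  refine Order.krullDim_le_of_strictMono (fun P => OrderDual.toDual (φ P)) ?_
  intro P Q hPQ
  rw [OrderDual.toDual_lt_toDual]
  have hle : cm P ≤ cm Q := Ideal.comap_mono hPQ.le
  have hback : ∀ P Q, cm P ≤ cm Q → P ≤ Q := by
    intro P Q h f hf
    obtain ⟨f, rfl⟩ := Ideal.Quotient.mk_surjective f
    exact h hf
  refine lt_of_le_not_ge ?_ ?_
  · intro x hx
    exact zeroLocus_anti_mono hle hx
  · intro h
    have h' : (Subtype.val ⁻¹' (zeroLocus ℂ (cm P)) : Set Z) ⊆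
        Subtype.val ⁻¹' (zeroLocus ℂ (cm Q)) := h
    have h3 : zeroLocus ℂ (cm P) ⊆ zeroLocus ℂ (cm Q) := sub_aux (hsub P) h'
    have h4 : cm Q ≤ cm P := by
      rw [← prime_van (hcp P), ← prime_van (hcp Q)]
      exact vanishingIdeal_anti_mono h3
    exact absurd (hback _ _ h4) (not_le_of_gt hPQ)

lemma perm_of_map {N : ℕ} {p q : Fin N → ℂ}
    (h : Finset.univ.val.map q = Finset.univ.val.map p) :
    ∃ σ : Equiv.Perm (Fin N), q = p ∘ σ := by
  classical
  have hc : ∀ v, Nonempty ({i // q i = v} ≃ {i // p i = v}) := by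
    intro v
    rw [← Fintype.card_eq, Fintype.card_subtype, Fintype.card_subtype]
    have := congrArg (Multiset.count v) h
    rw [Multiset.count_map, Multiset.count_map] at this
    simp only [eq_comm (a := v)] at this
    exact this
  refine ⟨Equiv.ofFiberEquiv fun v => (hc v).some, ?_⟩
  ext i
  exact (Equiv.ofFiberEquiv_map (fun v => (hc v).some) i).symm

lemma coeff_vanish (n m : ℕ) (f : MvPolynomial (Fin (n+1)) ℂ) (A : Finset (Fin (n+1) →₀ ℕ))
    (F : (Fin (n+1) →₀ ℕ) → MvPolynomial (Fin (n+1)) ℂ)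
    (hA : ∀ a ∈ A, (∀ i : Fin (n+1), a i + (i : ℕ) < n+1) ∧ a.degree < m + 1)
    (hF : ∀ a, (F a).IsSymmetric) (hf : f = ∑ a ∈ A, F a * monomial a 1)
    (p : Fin (n+1) → ℂ) (hp : m < (Set.range p).ncard)
    (hv : ∀ σ : Equiv.Perm (Fin (n+1)), eval (p ∘ σ) f = 0) :
    ∀ a ∈ A, eval p (F a) = 0 := by
  classical
  let r : MvPolynomial (Fin (n+1)) ℂ := ∑ a ∈ A, monomial a (eval p (F a))
  have hcoeff : ∀ b, coeff b r = if b ∈ A then eval p (F b) else 0 := by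
    intro b
    simp only [r, coeff_sum, coeff_monomial]
    rw [Finset.sum_ite_eq' A b (fun a => eval p (F a))]
  have hr : r = 0 := by
    refine stair_indep (n+1) (m+1) (Finset.univ.val.map p) r (by simp) (Or.inl ?_) ?_ ?_
    · have : (Finset.univ.val.map p).toFinset = Finset.univ.image p := rfl
      rw [this, ← Set.ncard_coe_finset, Finset.coe_image, Finset.coe_univ, Set.image_univ]
      exact hp
    · rw [mem_stairSub]
      intro a ha
      rw [mem_support_iff, hcoeff] at ha
      exact hA a (by by_contra h; simp [h] at ha)
    · intro q hq
      obtain ⟨σ, rfl⟩ := perm_of_map hq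
      have h1 := hv σ
      rw [hf] at h1
      rw [← h1]
      simp only [r, map_sum, map_mul]
      refine Finset.sum_congr rfl fun a _ => ?_
      have h2 : eval (p ∘ σ) (F a) = eval p (F a) := by rw [← eval_rename, (hF a) σ]
      rw [h2, eval_monomial, eval_monomial, one_mul]
  intro a ha
  have := hcoeff a
  rw [hr, if_pos ha] at this
  simpa using this.symm

lemma distinct_open (n m : ℕ) (p0 : Fin (n+1) → ℂ) (hp : m < (Set.range p0).ncard) :
    ∃ d : MvPolynomial (Fin (n+1)) ℂ, eval p0 d ≠ 0 ∧
      ∀ p, eval p d ≠ 0 → m < (Set.range p).ncard := by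
  classical
  obtain ⟨T, -, hT⟩ := Set.exists_subset_bijOn Set.univ p0
  refine ⟨∏ ij ∈ Finset.univ.filter (fun ij : Fin (n+1) × Fin (n+1) => ij.1 ∈ T ∧ ij.2 ∈ T ∧ ij.1 ≠ ij.2),
    (X ij.1 - X ij.2), ?_, ?_⟩
  · rw [map_prod, Finset.prod_ne_zero_iff]
    rintro ⟨i, j⟩ hij
    simp only [Finset.mem_filter, Finset.mem_univ, true_and] at hij
    simp only [map_sub, eval_X, sub_ne_zero]
    exact fun h => hij.2.2 (hT.injOn hij.1 hij.2.1 h)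
  · intro p h
    rw [map_prod, Finset.prod_ne_zero_iff] at h
    have hinj : Set.InjOn p T := by
      intro i hi j hj hij
      by_contra hne
      have := h (i, j) (by simp [hi, hj, hne])
      simp [hij] at this
    have h1 : (p0 '' T).ncard = T.ncard := hT.injOn.ncard_image
    rw [hT.image_eq, Set.image_univ] at h1
    have h2 : (p '' T).ncard = T.ncard := hinj.ncard_image
    have h3 : (p '' T).ncard ≤ (Set.range p).ncard :=
      Set.ncard_le_ncard (Set.image_subset_range _ _) (Set.finite_range p)
    omega

lemma case_one (n m : ℕ) (Z : Set (Fin (n + 1) → ℂ)) (hZ : @IsIrreducible _ (zariski n) Z)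
    (h : ∀ p ∈ Z, (Set.range p).ncard ≤ m) : zDim n Z ≤ (m : ℕ∞) := by
  letI := zariski n
  classical
  let L : (Fin (n+1) → Fin m) → Set (Fin (n+1) → ℂ) := fun c => {p | ∀ i j, c i = c j → p i = p j}
  have hL : ∀ c, IsClosed (L c) := by
    intro c
    convert zar_closed n {f | ∃ i j, c i = c j ∧ f = X i - X j} using 1
    ext p
    constructor
    · rintro hp _ ⟨i, j, hij, rfl⟩
      simp [hp i j hij]
    · intro hp i j hij
      simpa [sub_eq_zero] using hp _ ⟨i, j, hij, rfl⟩
  obtain ⟨z, hz, hzZ⟩ := isIrreducible_iff_sUnion_isClosed.1 hZ (Finset.univ.image L)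
    (by
      intro z hz
      obtain ⟨c, -, rfl⟩ := Finset.mem_image.1 hz
      exact hL c)
    (by
      intro p hp
      have h1 := h p hp
      have : Nonempty (Set.range p ↪ Fin m) := by
        apply Function.Embedding.nonempty_of_card_le
        rw [Fintype.card_fin, ← Nat.card_eq_fintype_card]
        exact h1
      obtain ⟨e⟩ := this
      refine ⟨L fun i => e ⟨p i, i, rfl⟩, by simp, ?_⟩
      intro i j hij
      have := e.injective hij
      exact congrArg Subtype.val this)
  obtain ⟨c, -, rfl⟩ := Finset.mem_image.1 hz
  exact dim_upper n m Z c fun p hp => hzZ hp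

/-- Proposition 4.5: let `M` be a nonzero `S_{n+1}`-invariant linear system of
homogeneous polynomials of degree `m`, `B` its base locus in `ℂ^{n+1}`, and `Z` an
irreducible component of `B`.  Then either (1) at each point of a nonempty (relatively)
open subset of `Z` the coordinates take at most `m` distinct values and the affine
dimension of `Z` is at most `m`, or (2) `Z` is an irreducible component of a
set-theoretic intersection of `S_{n+1}`-invariant hypersurfaces of degree at most `m`,
and the affine dimension of `Z` is at least `n + 1 − m`. -/
theorem stmt_4 (n m : ℕ) (hn : 1 ≤ n) (hm : 1 ≤ m)
    (M : Submodule ℂ (MvPolynomial (Fin (n + 1)) ℂ)) (hM0 : M ≠ ⊥)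
    (hMhom : ∀ f ∈ M, f.IsHomogeneous m)
    (hMinv : ∀ σ : Equiv.Perm (Fin (n + 1)), ∀ f ∈ M, rename (⇑σ) f ∈ M)
    (B : Set (Fin (n + 1) → ℂ)) (hB : B = {p | ∀ f ∈ M, eval p f = 0})
    (Z : Set (Fin (n + 1) → ℂ)) (hZ : IsIrredComponentOf n Z B) :
    ((∃ U : Set (Fin (n + 1) → ℂ), (zariski n).IsOpen U ∧ (U ∩ Z).Nonempty ∧
        ∀ p ∈ U ∩ Z, (Set.range p).ncard ≤ m) ∧
      zDim n Z ≤ (m : ℕ∞)) ∨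
    (∃ fs : Finset (MvPolynomial (Fin (n + 1)) ℂ),
      (∀ f ∈ fs, (∀ σ : Equiv.Perm (Fin (n + 1)), rename (⇑σ) f = f) ∧
        ∃ k ≤ m, f.IsHomogeneous k) ∧
      IsIrredComponentOf n Z {p | ∀ f ∈ fs, eval p f = 0} ∧
      ((n + 1 - m : ℕ) : ℕ∞) ≤ zDim n Z) := by
  classical
  letI := zariski n
  by_cases hcase : ∀ p ∈ Z, (Set.range p).ncard ≤ m
  · left
    refine ⟨⟨Set.univ, isOpen_univ, by simpa using hZ.1.2.1, fun p hp => hcase p hp.2⟩, ?_⟩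
    exact case_one n m Z hZ.1.2 hcase
  · right
    push Not at hcase
    obtain ⟨p0, hp0, hp0m⟩ := hcase
    have hnf : ∀ f : M, ∃ (A : Finset (Fin (n+1) →₀ ℕ)) (F : (Fin (n+1) →₀ ℕ) → MvPolynomial (Fin (n+1)) ℂ),
      (∀ a ∈ A, (∀ i : Fin (n+1), a i + (i : ℕ) < n+1) ∧ a.degree < m + 1) ∧
      (∀ a, (F a).IsSymmetric ∧ (F a).IsHomogeneous (m - a.degree)) ∧
      (f : MvPolynomial (Fin (n+1)) ℂ) = ∑ a ∈ A, F a * monomial a 1 :=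
      fun f => normal_form (n+1) m f (hMhom f f.2)
    choose A F hA hF hf using hnf
    let S : Set (MvPolynomial (Fin (n+1)) ℂ) := {g | ∃ f : M, ∃ a ∈ A f, g = F f a}
    obtain ⟨fs, hfsS, hspan⟩ := (Submodule.fg_span_iff_fg_span_finset_subset S).1
      (IsNoetherian.noetherian (Submodule.span (MvPolynomial (Fin (n+1)) ℂ) S))
    have hVB : {p : Fin (n+1) → ℂ | ∀ f ∈ fs, eval p f = 0} ⊆ B := by
      intro p hp
      have h1 : ∀ g ∈ S, eval p g = 0 := by
        intro g hg
        have h2 : g ∈ Ideal.span (fs : Set (MvPolynomial (Fin (n+1)) ℂ)) := by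
          have : g ∈ Submodule.span (MvPolynomial (Fin (n+1)) ℂ) S := Submodule.subset_span hg
          rw [hspan] at this
          exact this
        have h3 : Ideal.span (fs : Set (MvPolynomial (Fin (n+1)) ℂ)) ≤ RingHom.ker (eval p) :=
          Ideal.span_le.2 fun f hf => hp f hf
        exact h3 h2
      rw [hB]
      intro f hfM
      have := hf ⟨f, hfM⟩
      simp only at this
      rw [this, map_sum]
      refine Finset.sum_eq_zero fun a ha => ?_
      rw [map_mul, h1 _ ⟨⟨f, hfM⟩, a, ha, rfl⟩, zero_mul]
    have hZV : Z ⊆ {p : Fin (n+1) → ℂ | ∀ f ∈ fs, eval p f = 0} := by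
      obtain ⟨d, hd0, hd⟩ := distinct_open n m p0 hp0m
      have hprime := irr_prime n hZ.1.2
      intro p hp g hg
      obtain ⟨f, a, ha, rfl⟩ := hfsS hg
      have h1 : d * F f a ∈ vanishingIdeal ℂ Z := by
        rw [mem_van]
        intro x hx
        rw [map_mul]
        by_cases hdx : eval x d = 0
        · rw [hdx, zero_mul]
        · rw [coeff_vanish n m f (A f) (F f) (hA f) (fun a => (hF f a).1) (hf f) x (hd x hdx) ?_ a ha,
            mul_zero]
          intro σ
          rw [← eval_rename]
          have := hZ.1.1 hx
          rw [hB] at this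
          exact this _ (hMinv σ f f.2)
      rcases hprime.mem_or_mem h1 with h2 | h2
      · exact absurd (mem_van.1 h2 p0 hp0) hd0
      · exact mem_van.1 h2 p hp
    have hfs : ∀ f ∈ fs, f.IsSymmetric ∧ ∃ k ≤ m, f.IsHomogeneous k := by
      intro g hg
      obtain ⟨f, a, ha, rfl⟩ := hfsS hg
      exact ⟨(hF f a).1, _, Nat.sub_le _ _, (hF f a).2⟩
    have hcomp : IsIrredComponentOf n Z {p | ∀ f ∈ fs, eval p f = 0} :=
      ⟨⟨hZV, hZ.1.2⟩, fun s hs hZs => hZ.2 ⟨hs.1.trans hVB, hs.2⟩ hZs⟩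
    exact ⟨fs, fun f hf => ⟨(hfs f hf).1, (hfs f hf).2⟩, hcomp, dim_lower n m Z fs hfs hcomp⟩
end

section
/- Let v ∈ ℂ^5 be nonzero with v_0² + v_1² + v_2² + v_3² + v_4² = 0, so that the point [v] lies on the smooth quadric threefold Q ⊂ ℙ^4, and let O(v) = { ℂ·(v∘σ) : σ ∈ S_5 } be the set of complex lines spanned by the coordinate permutations of v, whose cardinality is the length of the S_5-orbit of [v] in Q. Fix i ∈ ℂ with i² = −1 and α ∈ ℂ with α² = −3/2. If |O(v)| < 20, then there exist σ ∈ S_5 and c ∈ ℂ \ {0} such that v∘σ = c·w, where w is one of the four vectors (2i,1,1,1,1), (−2i,1,1,1,1), (α,α,1,1,1), (−α,−α,1,1,1). Moreover, each of these four vectors satisfies the quadric equation, the corresponding four orbits have cardinalities 5, 5, 10, 10 respectively, and they are pairwise disjoint. -/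
/-- The set of complex lines `ℂ·(v∘σ)`, `σ ∈ S₅`, spanned by the coordinate
permutations of `v`; its cardinality is the length of the `S₅`-orbit of the
projective point `[v]`. -/
def orb (v : Fin 5 → ℂ) : Set (Set (Fin 5 → ℂ)) :=
  Set.range fun σ : Equiv.Perm (Fin 5) => {w | ∃ c : ℂ, w = c • (v ∘ ⇑σ)}

lemma orb_comp (v : Fin 5 → ℂ) (τ : Equiv.Perm (Fin 5)) : orb (v ∘ ⇑τ) = orb v := by
  unfold orb
  ext L
  constructor
  · rintro ⟨σ, rfl⟩
    exact ⟨τ * σ, rfl⟩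
  · rintro ⟨σ, rfl⟩
    refine ⟨τ⁻¹ * σ, ?_⟩
    have : (v ∘ ⇑τ) ∘ ⇑(τ⁻¹ * σ) = v ∘ ⇑σ := by
      funext k; simp
    simp only [this]

lemma line_eq {w w' : Fin 5 → ℂ}
    (h : ({x | ∃ c : ℂ, x = c • w} : Set (Fin 5 → ℂ)) = {x | ∃ c : ℂ, x = c • w'}) :
    ∃ c : ℂ, w = c • w' := by
  have : w ∈ ({x | ∃ c : ℂ, x = c • w} : Set (Fin 5 → ℂ)) := ⟨1, by simp⟩
  rw [h] at this
  exact this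

lemma ncard_orb (v : Fin 5 → ℂ) : (orb v).ncard = ((Finset.univ : Finset (Equiv.Perm (Fin 5))).image
    (fun σ : Equiv.Perm (Fin 5) => ({w | ∃ c : ℂ, w = c • (v ∘ ⇑σ)} : Set (Fin 5 → ℂ)))).card := by
  rw [← Set.ncard_coe_finset]
  simp [orb]

open Classical in
lemma bound {n : ℕ} (v : Fin 5 → ℂ) (hv : v ≠ 0) (p : Fin 5 → Fin 5)
    (hp : ∀ k l, v k = v l → p k = p l) (M : Finset ℂ)
    (hM : ∀ (σ : Equiv.Perm (Fin 5)) (c : ℂ), (∀ k, v (σ k) = c * v k) → c ∈ M)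
    (hK : (Finset.univ.filter (fun σ : Equiv.Perm (Fin 5) => ∀ k, p (σ k) = p k)).card * M.card ≤ n)
    (hn : n ≤ 6) :
    ¬ (orb v).ncard < 20 := by
  intro hlt
  set K := Finset.univ.filter (fun σ : Equiv.Perm (Fin 5) => ∀ k, p (σ k) = p k) with hKd
  set H := Finset.univ.filter (fun σ : Equiv.Perm (Fin 5) => ∃ c : ℂ, ∀ k, v (σ k) = c * v k) with hHd
  obtain ⟨j, hj⟩ : ∃ j, v j ≠ 0 := by
    by_contra! h
    exact hv (funext h)
  have h1 : H.card ≤ K.card * M.card := by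
    apply Finset.card_le_mul_card_image_of_maps_to (f := fun σ => v (σ j) / v j)
    · intro σ hσ
      simp only [hHd, Finset.mem_filter, Finset.mem_univ, true_and] at hσ
      obtain ⟨c, hc⟩ := hσ
      have := hM σ c hc
      have e : v (σ j) / v j = c := by rw [hc j]; field_simp
      rw [e]; exact this
    · intro b hb
      rcases (Finset.filter (fun σ => v (σ j) / v j = b) H).eq_empty_or_nonempty with h0 | ⟨σ0, h0⟩
      · rw [h0]; simp
      · have key : ∀ σ ∈ Finset.filter (fun σ : Equiv.Perm (Fin 5) => v (σ j) / v j = b) H, ∀ k, v (σ k) = b * v k := by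
          intro σ hσ
          simp only [hHd, Finset.mem_filter, Finset.mem_univ, true_and] at hσ
          obtain ⟨⟨c, hc⟩, hb⟩ := hσ
          have e : v (σ j) / v j = c := by rw [hc j]; field_simp
          rw [← hb, e]; exact hc
        apply Finset.card_le_card_of_injOn (fun σ => σ * σ0⁻¹)
        · intro σ hσ
          simp only [hKd, Finset.coe_filter, Finset.mem_univ, true_and, Set.mem_ofPred_eq]
          intro k
          apply hp
          have a := key σ hσ (σ0⁻¹ k)
          have b := key σ0 h0 (σ0⁻¹ k)
          simp only [← Equiv.Perm.mul_apply, mul_inv_cancel, Equiv.Perm.one_apply] at b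
          rw [Equiv.Perm.mul_apply, a, b]
        · intro a _ b _ hab
          exact mul_right_cancel hab
  have h2 : (Finset.univ : Finset (Equiv.Perm (Fin 5))).card ≤ H.card * (orb v).ncard := by
    rw [ncard_orb]
    apply Finset.card_le_mul_card_image_of_maps_to
      (f := fun σ : Equiv.Perm (Fin 5) => ({w | ∃ c : ℂ, w = c • (v ∘ ⇑σ)} : Set (Fin 5 → ℂ)))
    · intro σ _
      apply Finset.mem_coe.2
      convert Finset.mem_image_of_mem _ (Finset.mem_univ σ)
    · intro L hL
      obtain ⟨τ, -, rfl⟩ := Finset.mem_image.1 hL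
      apply Finset.card_le_card_of_injOn (fun σ => σ * τ⁻¹)
      · intro σ hσ
        have hσ' := (Finset.mem_filter.1 (Finset.mem_coe.1 hσ)).2
        obtain ⟨c, hc⟩ := line_eq hσ'
        simp only [hHd, Finset.coe_filter, Finset.mem_univ, true_and, Set.mem_ofPred_eq]
        refine ⟨c, fun k => ?_⟩
        have := congrFun hc (τ⁻¹ k)
        simpa using this
      · intro a _ b _ hab
        exact mul_right_cancel hab
  have h3 : (Finset.univ : Finset (Equiv.Perm (Fin 5))).card = 120 := by
    rw [Finset.card_univ, Fintype.card_perm]; rfl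
  rw [h3] at h2
  have : H.card ≤ 6 := by omega
  nlinarith

/-- Conclusion of the classification. -/
def Concl (i α : ℂ) (v : Fin 5 → ℂ) : Prop :=
  ∃ σ : Equiv.Perm (Fin 5), ∃ c : ℂ, c ≠ 0 ∧
    (v ∘ ⇑σ = c • ![2 * i, 1, 1, 1, 1] ∨ v ∘ ⇑σ = c • ![-(2 * i), 1, 1, 1, 1] ∨
      v ∘ ⇑σ = c • ![α, α, 1, 1, 1] ∨ v ∘ ⇑σ = c • ![-α, -α, 1, 1, 1])

def PP (i α : ℂ) (v : Fin 5 → ℂ) : Prop :=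
  v ≠ 0 → ∑ j, v j ^ 2 = 0 → (orb v).ncard < 20 → Concl i α v

lemma PP_perm {i α : ℂ} {v : Fin 5 → ℂ} (e : Equiv.Perm (Fin 5)) (h : PP i α (v ∘ ⇑e)) :
    PP i α v := by
  intro hv hq hc
  have h1 : v ∘ ⇑e ≠ 0 := by
    intro h0
    apply hv
    funext k
    have := congrFun h0 (e⁻¹ k)
    simpa using this
  have h2 : ∑ j, (v ∘ ⇑e) j ^ 2 = 0 := by
    rw [← hq]
    exact Equiv.sum_comp e (fun j => v j ^ 2)
  obtain ⟨σ, c, hc0, hσ⟩ := h h1 h2 (by rwa [orb_comp])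
  exact ⟨e * σ, c, hc0, hσ⟩

lemma sum_eq {v : Fin 5 → ℂ} {σ : Equiv.Perm (Fin 5)} {e : ℂ} (h : ∀ k, v (σ k) = e * v k) :
    ∑ k, v k = e * ∑ k, v k := by
  rw [Finset.mul_sum, ← Equiv.sum_comp σ v]
  exact Finset.sum_congr rfl (fun k _ => h k)

lemma t5 {i α a : ℂ} : PP i α ![a, a, a, a, a] := by
  intro hv hq _
  exfalso
  simp [Fin.sum_univ_five] at hq
  apply hv
  have : a = 0 := by
    have : a ^ 2 = 0 := by linear_combination hq / 5
    simpa using this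
  subst this
  funext k; fin_cases k <;> rfl

lemma t41 {i α a b : ℂ} (hi : i ^ 2 = -1) : PP i α ![a, a, a, a, b] := by
  intro hv hq _
  simp [Fin.sum_univ_five] at hq
  have ha : a ≠ 0 := by
    rintro rfl
    have : b = 0 := by simpa using hq
    subst this
    apply hv
    funext k; fin_cases k <;> rfl
  have h : (b - 2 * i * a) * (b + 2 * i * a) = 0 := by
    linear_combination hq - 4 * a ^ 2 * hi
  refine ⟨Equiv.swap 0 4, a, ha, ?_⟩
  rcases mul_eq_zero.1 h with h | h
  · left
    funext k
    fin_cases k <;> simp [Equiv.swap_apply_def]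
    linear_combination h
  · right; left
    funext k
    fin_cases k <;> simp [Equiv.swap_apply_def]
    linear_combination h

lemma t32 {i α a b : ℂ} (hα : α ^ 2 = -(3 / 2)) : PP i α ![a, a, a, b, b] := by
  intro hv hq _
  simp [Fin.sum_univ_five] at hq
  have ha : a ≠ 0 := by
    rintro rfl
    have : b ^ 2 = 0 := by linear_combination hq / 2
    have : b = 0 := by simpa using this
    subst this
    apply hv
    funext k; fin_cases k <;> rfl
  have h : (b - α * a) * (b + α * a) = 0 := by
    linear_combination hq / 2 - a ^ 2 * hα
  refine ⟨Equiv.swap 0 4 * Equiv.swap 1 3, a, ha, ?_⟩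
  rcases mul_eq_zero.1 h with h | h
  · right; right; left
    funext k
    fin_cases k <;> simp [Equiv.swap_apply_def] <;> linear_combination h
  · right; right; right
    funext k
    fin_cases k <;> simp [Equiv.swap_apply_def] <;> linear_combination h

lemma inj_ne (σ : Equiv.Perm (Fin 5)) {k l : Fin 5} (h : k ≠ l) : σ k ≠ σ l :=
  fun h' => h (σ.injective h')

lemma t11111 {i α : ℂ} {v : Fin 5 → ℂ} (h : Function.Injective v) : PP i α v := by
  intro hv hq hc
  exfalso
  classical
  obtain ⟨j, hj⟩ : ∃ j, v j ≠ 0 := by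
    by_contra! h
    exact hv (funext h)
  refine bound (n := 5) v hv id (fun k l hkl => h hkl) (Finset.univ.image (fun k => v k / v j)) ?_ ?_
    (by norm_num) hc
  · intro σ c hσ
    refine Finset.mem_image.2 ⟨σ j, Finset.mem_univ _, ?_⟩
    rw [hσ j]; field_simp
  · have h1 : (Finset.univ.filter (fun σ : Equiv.Perm (Fin 5) => ∀ k, id (σ k) = id k)).card = 1 := by
      decide
    have h2 : (Finset.univ.image (fun k => v k / v j)).card ≤ 5 := by
      refine Finset.card_image_le.trans ?_
      simp
    rw [h1]; omega

lemma two_eq {a b c d : ℂ} (hab : a ≠ b) (hac : a ≠ c) (had : a ≠ d) (hbc : b ≠ c) (hbd : b ≠ d)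
    (hcd : c ≠ d) (k l : Fin 5) (hkl : k ≠ l) (h : ![a, a, b, c, d] k = ![a, a, b, c, d] l) :
    ![a, a, b, c, d] k = a := by
  fin_cases k <;> fin_cases l <;> simp_all

lemma t2111 {i α a b c d : ℂ} (hab : a ≠ b) (hac : a ≠ c) (had : a ≠ d) (hbc : b ≠ c) (hbd : b ≠ d)
    (hcd : c ≠ d) : PP i α ![a, a, b, c, d] := by
  intro hv hq hc
  exfalso
  classical
  have hp : ∀ k l : Fin 5, ![a, a, b, c, d] k = ![a, a, b, c, d] l →
      (![0, 0, 1, 2, 3] : Fin 5 → Fin 5) k = (![0, 0, 1, 2, 3] : Fin 5 → Fin 5) l := by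
    intro k l hkl
    fin_cases k <;> fin_cases l <;> simp_all
  have h1 : (Finset.univ.filter (fun σ : Equiv.Perm (Fin 5) => ∀ k,
      (![0, 0, 1, 2, 3] : Fin 5 → Fin 5) (σ k) = (![0, 0, 1, 2, 3] : Fin 5 → Fin 5) k)).card = 2 := by
    decide
  have hea : ∀ (σ : Equiv.Perm (Fin 5)) (e : ℂ),
      (∀ k, ![a, a, b, c, d] (σ k) = e * ![a, a, b, c, d] k) → e * a = a := by
    intro σ e he
    have h0 : ![a, a, b, c, d] (σ 0) = e * a := he 0
    have h1 : ![a, a, b, c, d] (σ 1) = e * a := he 1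
    rw [← h0]
    exact two_eq hab hac had hbc hbd hcd _ _ (inj_ne σ (by decide)) (h0.trans h1.symm)
  by_cases ha : a = 0
  · have hb : b ≠ 0 := fun h => hab (ha.trans h.symm)
    refine bound (n := 6) _ hv _ hp {1, c / b, d / b} ?_ ?_ le_rfl hc
    · intro σ e he
      have e0 : e ≠ 0 := by
        intro e0
        obtain ⟨m, hm⟩ := σ.surjective 2
        have hh := he m
        rw [hm, e0, zero_mul] at hh
        exact hb hh
      have h2 : ![a, a, b, c, d] (σ 2) = e * b := he 2
      have e1 : e = ![a, a, b, c, d] (σ 2) / b := by rw [h2]; field_simp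
      have hx : ∀ k : Fin 5, ![a, a, b, c, d] k = a ∨ ![a, a, b, c, d] k = b ∨
          ![a, a, b, c, d] k = c ∨ ![a, a, b, c, d] k = d := by
        intro k
        fin_cases k <;> simp
      rcases hx (σ 2) with h | h | h | h
      · rw [h, ha, zero_div] at e1
        exact absurd e1 e0
      · rw [h, div_self hb] at e1
        simp [e1]
      · rw [h] at e1
        simp [e1]
      · rw [h] at e1
        simp [e1]
    · rw [h1]
      have : ({1, c / b, d / b} : Finset ℂ).card ≤ 3 := Finset.card_le_three
      omega
  · refine bound (n := 2) _ hv _ hp {1} ?_ ?_ (by norm_num) hc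
    · intro σ e he
      have := hea σ e he
      simp only [Finset.mem_singleton]
      exact mul_right_cancel₀ ha (by rw [this, one_mul])
    · rw [h1]; simp

lemma t221 {i α a b c : ℂ} (hab : a ≠ b) (hac : a ≠ c) (hbc : b ≠ c) :
    PP i α ![a, a, b, b, c] := by
  intro hv hq hc
  exfalso
  classical
  have hp : ∀ k l : Fin 5, ![a, a, b, b, c] k = ![a, a, b, b, c] l →
      (![0, 0, 1, 1, 2] : Fin 5 → Fin 5) k = (![0, 0, 1, 1, 2] : Fin 5 → Fin 5) l := by
    intro k l hkl
    fin_cases k <;> fin_cases l <;> simp_all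
  have h1 : (Finset.univ.filter (fun σ : Equiv.Perm (Fin 5) => ∀ k,
      (![0, 0, 1, 1, 2] : Fin 5 → Fin 5) (σ k) = (![0, 0, 1, 1, 2] : Fin 5 → Fin 5) k)).card = 4 := by
    decide
  have htwo : ∀ k l : Fin 5, k ≠ l → ![a, a, b, b, c] k = ![a, a, b, b, c] l →
      ![a, a, b, b, c] k = a ∨ ![a, a, b, b, c] k = b := by
    intro k l hkl h
    fin_cases k <;> fin_cases l <;> simp_all
  refine bound (n := 4) _ hv _ hp {1} ?_ ?_ (by norm_num) hc
  · intro σ e he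
    have h0 : ![a, a, b, b, c] (σ 0) = e * a := he 0
    have h1 : ![a, a, b, b, c] (σ 1) = e * a := he 1
    have h2 : ![a, a, b, b, c] (σ 2) = e * b := he 2
    have h3 : ![a, a, b, b, c] (σ 3) = e * b := he 3
    have ha := htwo _ _ (inj_ne σ (show (0 : Fin 5) ≠ 1 by decide)) (h0.trans h1.symm)
    have hb := htwo _ _ (inj_ne σ (show (2 : Fin 5) ≠ 3 by decide)) (h2.trans h3.symm)
    rw [h0] at ha
    rw [h2] at hb
    replace hb := hb.symm
    have hs := sum_eq he
    simp [Fin.sum_univ_five] at hs hq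
    rw [Finset.mem_singleton]
    by_contra hne
    have hne' : e - 1 ≠ 0 := sub_ne_zero.2 hne
    have S : a + a + b + b + c = 0 := by
      have : (e - 1) * (a + a + b + b + c) = 0 := by linear_combination -hs
      simpa [hne'] using this
    have fix : ∀ x : ℂ, e * x = x → x = 0 := by
      intro x hx
      have : (e - 1) * x = 0 := by linear_combination hx
      simpa [hne'] using this
    rcases ha with ha | ha
    · have a0 := fix a ha
      rcases hb with hb | hb
      · exact hab (a0.trans (fix b hb).symm)
      · have e0 : e = 0 := by
          have : e * b = 0 := hb.trans a0
          rcases mul_eq_zero.1 this with h | h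
          · exact h
          · exact absurd (a0.trans h.symm) hab
        have := he 4
        obtain ⟨m, hm⟩ := σ.surjective 2
        have hh := he m
        rw [hm, e0, zero_mul] at hh
        exact hab (a0.trans hh.symm)
    · rcases hb with hb | hb
      · have b0 := fix b hb
        obtain ⟨m, hm⟩ := σ.surjective 0
        have hh := he m
        have a0 : a ≠ 0 := fun h => hab (h.trans b0.symm)
        have e0 : e = 0 := by
          have : e * a = 0 := ha.trans b0
          simpa [a0] using this
        rw [hm, e0, zero_mul] at hh
        exact a0 hh
      · have a0 : a ≠ 0 := by
          intro h
          rw [h, mul_zero] at ha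
          exact hab (h.trans ha)
        have e2 : (e - 1) * ((e + 1) * a) = 0 := by linear_combination e * ha + hb
        have e3 : e + 1 = 0 := by simpa [hne', a0] using e2
        have b1 : b = -a := by linear_combination -ha + a * e3
        have c0 : c = 0 := by linear_combination S - 2 * b1
        rw [b1, c0] at hq
        have : a ^ 2 = 0 := by linear_combination hq / 4
        exact a0 (by simpa using this)
  · rw [h1]; simp

lemma t311 {i α a b c : ℂ} (hab : a ≠ b) (hac : a ≠ c) (hbc : b ≠ c) :
    PP i α ![a, a, a, b, c] := by
  intro hv hq hc
  exfalso
  classical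
  have hp : ∀ k l : Fin 5, ![a, a, a, b, c] k = ![a, a, a, b, c] l →
      (![0, 0, 0, 1, 2] : Fin 5 → Fin 5) k = (![0, 0, 0, 1, 2] : Fin 5 → Fin 5) l := by
    intro k l hkl
    fin_cases k <;> fin_cases l <;> simp_all
  have h1 : (Finset.univ.filter (fun σ : Equiv.Perm (Fin 5) => ∀ k,
      (![0, 0, 0, 1, 2] : Fin 5 → Fin 5) (σ k) = (![0, 0, 0, 1, 2] : Fin 5 → Fin 5) k)).card = 6 := by
    decide
  have htwo : ∀ k l : Fin 5, k ≠ l → ![a, a, a, b, c] k = ![a, a, a, b, c] l →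
      ![a, a, a, b, c] k = a := by
    intro k l hkl h
    fin_cases k <;> fin_cases l <;> simp_all
  refine bound (n := 6) _ hv _ hp {1} ?_ ?_ (by norm_num) hc
  · intro σ e he
    have h0 : ![a, a, a, b, c] (σ 0) = e * a := he 0
    have h1 : ![a, a, a, b, c] (σ 1) = e * a := he 1
    have ha := htwo _ _ (inj_ne σ (show (0 : Fin 5) ≠ 1 by decide)) (h0.trans h1.symm)
    rw [h0] at ha
    have hs := sum_eq he
    simp [Fin.sum_univ_five] at hs hq
    rw [Finset.mem_singleton]
    by_contra hne
    have hne' : e - 1 ≠ 0 := sub_ne_zero.2 hne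
    have S : a + a + a + b + c = 0 := by
      have : (e - 1) * (a + a + a + b + c) = 0 := by linear_combination -hs
      simpa [hne'] using this
    have a0 : a = 0 := by
      have : (e - 1) * a = 0 := by linear_combination ha
      simpa [hne'] using this
    have cb : c = -b := by linear_combination S - 3 * a0
    rw [a0, cb] at hq
    have : b ^ 2 = 0 := by linear_combination hq / 2
    exact hab (a0.trans (by simpa using this : b = 0).symm)
  · rw [h1]; simp

lemma contig (v : Fin 5 → ℂ) : ∃ τ : Equiv.Perm (Fin 5), ∀ k l m : Fin 5, k ≤ l → l ≤ m →
    v (τ k) = v (τ m) → v (τ k) = v (τ l) := by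
  classical
  have hex : ∀ k, ∃ l, v l = v k := fun k => ⟨k, rfl⟩
  let f : ℂ → Fin 5 := fun z => Function.invFun v z
  have hf : ∀ k, v (f (v k)) = v k := fun k => Function.invFun_eq (hex k)
  refine ⟨Tuple.sort (f ∘ v), fun k l m hkl hlm h => ?_⟩
  have hm := Tuple.monotone_sort (f ∘ v)
  have a := hm hkl
  have b := hm hlm
  simp only [Function.comp_apply] at a b
  rw [← h] at b
  have := le_antisymm a b
  rw [← hf, this, hf]

lemma contig_ne {u : Fin 5 → ℂ}
    (h : ∀ k l m : Fin 5, k ≤ l → l ≤ m → u k = u m → u k = u l) :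
    (u 0 = u 2 → u 0 = u 1) ∧ (u 0 = u 3 → u 0 = u 1) ∧ (u 0 = u 4 → u 0 = u 1) ∧
    (u 1 = u 3 → u 1 = u 2) ∧ (u 1 = u 4 → u 1 = u 2) ∧ (u 2 = u 4 → u 2 = u 3) :=
  ⟨h 0 1 2 (by decide) (by decide), h 0 1 3 (by decide) (by decide),
    h 0 1 4 (by decide) (by decide), h 1 2 3 (by decide) (by decide),
    h 1 2 4 (by decide) (by decide), h 2 3 4 (by decide) (by decide)⟩

lemma fin11111 {i α : ℂ} {u : Fin 5 → ℂ}
    (h : (u 0 = u 2 → u 0 = u 1) ∧ (u 0 = u 3 → u 0 = u 1) ∧ (u 0 = u 4 → u 0 = u 1) ∧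
    (u 1 = u 3 → u 1 = u 2) ∧ (u 1 = u 4 → u 1 = u 2) ∧ (u 2 = u 4 → u 2 = u 3))
    (h01 : u 0 ≠ u 1) (h12 : u 1 ≠ u 2) (h23 : u 2 ≠ u 3) (h34 : u 3 ≠ u 4) : PP i α u := by
  apply t11111
  intro k l hkl
  fin_cases k <;> fin_cases l <;> simp at hkl ⊢ <;> grind

lemma classify_contig {i α : ℂ} (hi : i ^ 2 = -1) (hα : α ^ 2 = -(3 / 2)) (u : Fin 5 → ℂ)
    (h : (u 0 = u 2 → u 0 = u 1) ∧ (u 0 = u 3 → u 0 = u 1) ∧ (u 0 = u 4 → u 0 = u 1) ∧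
    (u 1 = u 3 → u 1 = u 2) ∧ (u 1 = u 4 → u 1 = u 2) ∧ (u 2 = u 4 → u 2 = u 3)) :
    PP i α u := by
  by_cases h01 : u 0 = u 1
  · by_cases h12 : u 1 = u 2
    · by_cases h23 : u 2 = u 3
      · by_cases h34 : u 3 = u 4
        · apply PP_perm (1)
          have e : u ∘ ⇑(1 : Equiv.Perm (Fin 5)) = ![u 0, u 0, u 0, u 0, u 0] := by
            funext k; fin_cases k <;> simp [Equiv.swap_apply_def, *]
          rw [e]
          exact t5
        · apply PP_perm (1)
          have e : u ∘ ⇑(1 : Equiv.Perm (Fin 5)) = ![u 0, u 0, u 0, u 0, u 4] := by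
            funext k; fin_cases k <;> simp [Equiv.swap_apply_def, *]
          rw [e]
          exact t41 hi
      · by_cases h34 : u 3 = u 4
        · apply PP_perm (1)
          have e : u ∘ ⇑(1 : Equiv.Perm (Fin 5)) = ![u 0, u 0, u 0, u 3, u 3] := by
            funext k; fin_cases k <;> simp [Equiv.swap_apply_def, *]
          rw [e]
          exact t32 hα
        · apply PP_perm (1)
          have e : u ∘ ⇑(1 : Equiv.Perm (Fin 5)) = ![u 0, u 0, u 0, u 3, u 4] := by
            funext k; fin_cases k <;> simp [Equiv.swap_apply_def, *]
          rw [e]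
          exact t311 (by grind) (by grind) (by grind)
    · by_cases h23 : u 2 = u 3
      · by_cases h34 : u 3 = u 4
        · apply PP_perm (Equiv.swap 3 4 * Equiv.swap 2 3 * Equiv.swap 1 4 * Equiv.swap 0 3)
          have e : u ∘ ⇑(Equiv.swap 3 4 * Equiv.swap 2 3 * Equiv.swap 1 4 * Equiv.swap 0 3 : Equiv.Perm (Fin 5)) = ![u 2, u 2, u 2, u 0, u 0] := by
            funext k; fin_cases k <;> simp [Equiv.swap_apply_def, *]
          rw [e]
          exact t32 hα
        · apply PP_perm (1)
          have e : u ∘ ⇑(1 : Equiv.Perm (Fin 5)) = ![u 0, u 0, u 2, u 2, u 4] := by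
            funext k; fin_cases k <;> simp [Equiv.swap_apply_def, *]
          rw [e]
          exact t221 (by grind) (by grind) (by grind)
      · by_cases h34 : u 3 = u 4
        · apply PP_perm (Equiv.swap 3 4 * Equiv.swap 2 4)
          have e : u ∘ ⇑(Equiv.swap 3 4 * Equiv.swap 2 4 : Equiv.Perm (Fin 5)) = ![u 0, u 0, u 3, u 3, u 2] := by
            funext k; fin_cases k <;> simp [Equiv.swap_apply_def, *]
          rw [e]
          exact t221 (by grind) (by grind) (by grind)
        · apply PP_perm (1)
          have e : u ∘ ⇑(1 : Equiv.Perm (Fin 5)) = ![u 0, u 0, u 2, u 3, u 4] := by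
            funext k; fin_cases k <;> simp [Equiv.swap_apply_def, *]
          rw [e]
          exact t2111 (by grind) (by grind) (by grind) (by grind) (by grind) (by grind)
  · by_cases h12 : u 1 = u 2
    · by_cases h23 : u 2 = u 3
      · by_cases h34 : u 3 = u 4
        · apply PP_perm (Equiv.swap 3 4 * Equiv.swap 2 4 * Equiv.swap 1 4 * Equiv.swap 0 4)
          have e : u ∘ ⇑(Equiv.swap 3 4 * Equiv.swap 2 4 * Equiv.swap 1 4 * Equiv.swap 0 4 : Equiv.Perm (Fin 5)) = ![u 1, u 1, u 1, u 1, u 0] := by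
            funext k; fin_cases k <;> simp [Equiv.swap_apply_def, *]
          rw [e]
          exact t41 hi
        · apply PP_perm (Equiv.swap 2 3 * Equiv.swap 1 3 * Equiv.swap 0 3)
          have e : u ∘ ⇑(Equiv.swap 2 3 * Equiv.swap 1 3 * Equiv.swap 0 3 : Equiv.Perm (Fin 5)) = ![u 1, u 1, u 1, u 0, u 4] := by
            funext k; fin_cases k <;> simp [Equiv.swap_apply_def, *]
          rw [e]
          exact t311 (by grind) (by grind) (by grind)
      · by_cases h34 : u 3 = u 4
        · apply PP_perm (Equiv.swap 3 4 * Equiv.swap 2 4 * Equiv.swap 1 4 * Equiv.swap 0 4)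
          have e : u ∘ ⇑(Equiv.swap 3 4 * Equiv.swap 2 4 * Equiv.swap 1 4 * Equiv.swap 0 4 : Equiv.Perm (Fin 5)) = ![u 1, u 1, u 3, u 3, u 0] := by
            funext k; fin_cases k <;> simp [Equiv.swap_apply_def, *]
          rw [e]
          exact t221 (by grind) (by grind) (by grind)
        · apply PP_perm (Equiv.swap 1 2 * Equiv.swap 0 2)
          have e : u ∘ ⇑(Equiv.swap 1 2 * Equiv.swap 0 2 : Equiv.Perm (Fin 5)) = ![u 1, u 1, u 0, u 3, u 4] := by
            funext k; fin_cases k <;> simp [Equiv.swap_apply_def, *]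
          rw [e]
          exact t2111 (by grind) (by grind) (by grind) (by grind) (by grind) (by grind)
    · by_cases h23 : u 2 = u 3
      · by_cases h34 : u 3 = u 4
        · apply PP_perm (Equiv.swap 3 4 * Equiv.swap 2 3 * Equiv.swap 1 4 * Equiv.swap 0 3)
          have e : u ∘ ⇑(Equiv.swap 3 4 * Equiv.swap 2 3 * Equiv.swap 1 4 * Equiv.swap 0 3 : Equiv.Perm (Fin 5)) = ![u 2, u 2, u 2, u 0, u 1] := by
            funext k; fin_cases k <;> simp [Equiv.swap_apply_def, *]
          rw [e]
          exact t311 (by grind) (by grind) (by grind)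
        · apply PP_perm (Equiv.swap 1 3 * Equiv.swap 0 2)
          have e : u ∘ ⇑(Equiv.swap 1 3 * Equiv.swap 0 2 : Equiv.Perm (Fin 5)) = ![u 2, u 2, u 0, u 1, u 4] := by
            funext k; fin_cases k <;> simp [Equiv.swap_apply_def, *]
          rw [e]
          exact t2111 (by grind) (by grind) (by grind) (by grind) (by grind) (by grind)
      · by_cases h34 : u 3 = u 4
        · apply PP_perm (Equiv.swap 3 4 * Equiv.swap 2 4 * Equiv.swap 1 3 * Equiv.swap 0 2)
          have e : u ∘ ⇑(Equiv.swap 3 4 * Equiv.swap 2 4 * Equiv.swap 1 3 * Equiv.swap 0 2 : Equiv.Perm (Fin 5)) = ![u 3, u 3, u 0, u 1, u 2] := by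
            funext k; fin_cases k <;> simp [Equiv.swap_apply_def, *]
          rw [e]
          exact t2111 (by grind) (by grind) (by grind) (by grind) (by grind) (by grind)
        · exact fin11111 h h01 h12 h23 h34

lemma classify {i α : ℂ} (hi : i ^ 2 = -1) (hα : α ^ 2 = -(3 / 2)) (v : Fin 5 → ℂ) : PP i α v := by
  obtain ⟨τ, h⟩ := contig v
  exact PP_perm τ (classify_contig hi hα _ (contig_ne h))

lemma rigid {w w' : Fin 5 → ℂ} (h2 : w 2 = 1) (h3 : w 3 = 1) (h4 : w 4 = 1)
    (h2' : w' 2 = 1) (h3' : w' 3 = 1) (h4' : w' 4 = 1) (σ τ : Equiv.Perm (Fin 5))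
    (h : ({x | ∃ c : ℂ, x = c • (w ∘ ⇑σ)} : Set (Fin 5 → ℂ)) = {x | ∃ c : ℂ, x = c • (w' ∘ ⇑τ)}) :
    w ∘ ⇑σ = w' ∘ ⇑τ := by
  obtain ⟨c, hc⟩ := line_eq h
  have hw : ∀ k : Fin 5, 2 ≤ k → w k = 1 := by
    intro k hk; fin_cases k <;> simp_all
  have hw' : ∀ k : Fin 5, 2 ≤ k → w' k = 1 := by
    intro k hk; fin_cases k <;> simp_all
  obtain ⟨k, hk1, hk2⟩ : ∃ k, 2 ≤ σ k ∧ 2 ≤ τ k := by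
    by_contra! hcon
    have : (Finset.univ : Finset (Fin 5)) ⊆
        {σ⁻¹ 0, σ⁻¹ 1, τ⁻¹ 0, τ⁻¹ 1} := by
      intro k _
      have hx := hcon k
      have e : ∀ x : Fin 5, ¬ 2 ≤ x → x = 0 ∨ x = 1 := by decide
      simp only [Finset.mem_insert, Finset.mem_singleton, Equiv.Perm.eq_inv_iff_eq]
      by_cases h2 : 2 ≤ σ k
      · rcases e _ (not_le.2 (hx h2)) with h | h <;> simp [h]
      · rcases e _ h2 with h | h <;> simp [h]
    have := (Finset.card_le_card this).trans Finset.card_le_four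
    simp at this
  have := congrFun hc k
  simp only [Function.comp_apply, Pi.smul_apply, smul_eq_mul, hw _ hk1, hw' _ hk2, mul_one] at this
  rw [hc, ← this, one_smul]

lemma disj {w w' : Fin 5 → ℂ} (h2 : w 2 = 1) (h3 : w 3 = 1) (h4 : w 4 = 1)
    (h2' : w' 2 = 1) (h3' : w' 3 = 1) (h4' : w' 4 = 1) (hs : ∑ k, w k ≠ ∑ k, w' k) :
    orb w ∩ orb w' = ∅ := by
  ext L
  simp only [Set.mem_inter_iff, Set.mem_empty_iff_false, iff_false]
  rintro ⟨⟨σ, rfl⟩, ⟨τ, hτ⟩⟩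
  have := rigid h2 h3 h4 h2' h3' h4' σ τ hτ.symm
  apply hs
  rw [← Equiv.sum_comp σ w, ← Equiv.sum_comp τ w']
  exact Finset.sum_congr rfl (fun k _ => congrFun this k)

lemma card_orb {w : Fin 5 → ℂ} (h2 : w 2 = 1) (h3 : w 3 = 1) (h4 : w 4 = 1) (p : Fin 5 → Fin 5)
    (hp : ∀ k l, w k = w l ↔ p k = p l) :
    (orb w).ncard = (Finset.univ.image (fun σ : Equiv.Perm (Fin 5) => p ∘ ⇑σ)).card := by
  classical
  let g : Fin 5 → ℂ := fun x => w (Function.invFun p x)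
  have hg : ∀ k, g (p k) = w k := by
    intro k
    exact (hp _ _).2 (Function.invFun_eq ⟨k, rfl⟩)
  have : orb w = (fun q : Fin 5 → Fin 5 => ({x | ∃ c : ℂ, x = c • (g ∘ q)} : Set (Fin 5 → ℂ))) ''
      ↑(Finset.univ.image (fun σ : Equiv.Perm (Fin 5) => p ∘ ⇑σ)) := by
    have hh : ∀ σ : Equiv.Perm (Fin 5), g ∘ (p ∘ ⇑σ) = w ∘ ⇑σ := fun σ => funext fun k => hg _
    ext L
    simp [orb, hh]
  rw [this, Set.ncard_image_of_injOn, Set.ncard_coe_finset]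
  intro q hq r hr hqr
  simp only [Finset.coe_image, Finset.coe_univ, Set.image_univ, Set.mem_range] at hq hr
  obtain ⟨σ, rfl⟩ := hq
  obtain ⟨τ, rfl⟩ := hr
  have hh : ∀ σ : Equiv.Perm (Fin 5), g ∘ (p ∘ ⇑σ) = w ∘ ⇑σ := fun σ => funext fun k => hg _
  simp only [hh] at hqr
  have := rigid h2 h3 h4 h2 h3 h4 σ τ hqr
  funext k
  exact (hp _ _).1 (congrFun this k)

set_option maxRecDepth 100000 in
lemma card5 {b : ℂ} (hb : b ≠ 1) : (orb ![b, 1, 1, 1, 1]).ncard = 5 := by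
  rw [card_orb rfl rfl rfl ![0, 1, 1, 1, 1]]
  · decide
  · intro k l
    fin_cases k <;> fin_cases l <;> simp [hb, hb.symm]

set_option maxRecDepth 100000 in
lemma card10 {b : ℂ} (hb : b ≠ 1) : (orb ![b, b, 1, 1, 1]).ncard = 10 := by
  rw [card_orb rfl rfl rfl ![0, 0, 1, 1, 1]]
  · decide
  · intro k l
    fin_cases k <;> fin_cases l <;> simp [hb, hb.symm]

/-- Lemma 3.6 (small orbits on the quadric): any `S₅`-orbit of length `< 20` on the
quadric `{x₀² + ⋯ + x₄² = 0} ⊂ ℙ⁴` is one of `Σ₅`, `Σ₅′`, `Σ₁₀`, `Σ₁₀′`, i.e. the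
orbit of one of the points `(±2i,1,1,1,1)`, `(±α,±α,1,1,1)` with `i² = −1`,
`α² = −3/2`; these four points lie on the quadric, their orbits have lengths
`5, 5, 10, 10`, and the four orbits are pairwise disjoint. -/
theorem stmt_7 (v : Fin 5 → ℂ) (hv : v ≠ 0) (hq : ∑ j, v j ^ 2 = 0)
    (i α : ℂ) (hi : i ^ 2 = -1) (hα : α ^ 2 = -(3 / 2)) :
    ∀ (w₁ w₂ w₃ w₄ : Fin 5 → ℂ),
      w₁ = ![2 * i, 1, 1, 1, 1] → w₂ = ![-(2 * i), 1, 1, 1, 1] →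
      w₃ = ![α, α, 1, 1, 1] → w₄ = ![-α, -α, 1, 1, 1] →
      (((orb v).ncard < 20 →
          ∃ σ : Equiv.Perm (Fin 5), ∃ c : ℂ, c ≠ 0 ∧
            (v ∘ ⇑σ = c • w₁ ∨ v ∘ ⇑σ = c • w₂ ∨ v ∘ ⇑σ = c • w₃ ∨ v ∘ ⇑σ = c • w₄)) ∧
        (∑ j, w₁ j ^ 2 = 0) ∧ (∑ j, w₂ j ^ 2 = 0) ∧
        (∑ j, w₃ j ^ 2 = 0) ∧ (∑ j, w₄ j ^ 2 = 0) ∧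
        (orb w₁).ncard = 5 ∧ (orb w₂).ncard = 5 ∧
        (orb w₃).ncard = 10 ∧ (orb w₄).ncard = 10 ∧
        orb w₁ ∩ orb w₂ = ∅ ∧ orb w₁ ∩ orb w₃ = ∅ ∧ orb w₁ ∩ orb w₄ = ∅ ∧
        orb w₂ ∩ orb w₃ = ∅ ∧ orb w₂ ∩ orb w₄ = ∅ ∧ orb w₃ ∩ orb w₄ = ∅) := by
  rintro w₁ w₂ w₃ w₄ rfl rfl rfl rfl
  have ne1 : 2 * i ≠ 1 := by
    intro h
    have : (5 : ℂ) = 0 := by linear_combination (-1 - 2 * i) * h + 4 * hi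
    norm_num at this
  have ne2 : -(2 * i) ≠ 1 := by
    intro h
    have : (5 : ℂ) = 0 := by linear_combination (-1 + 2 * i) * h + 4 * hi
    norm_num at this
  have ne3 : α ≠ 1 := by
    rintro rfl
    norm_num at hα
  have ne4 : -α ≠ 1 := by
    intro h
    have : α = -1 := by linear_combination -h
    subst this
    norm_num at hα
  have i0 : i ≠ 0 := by
    rintro rfl
    norm_num at hi
  have a0 : α ≠ 0 := by
    rintro rfl
    norm_num at hα
  have key : ∀ s t : ℂ, s ^ 2 = -1 → t ^ 2 = -(3 / 2) → 2 * s + 4 ≠ 2 * t + 3 := by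
    intro s t hs ht h
    have h1 : 4 * s = -3 := by linear_combination (2 * s + 1 + 2 * t) * h - 4 * hs + 4 * ht
    have h2 : (25 : ℂ) = 0 := by linear_combination -(4 * s - 3) * h1 + 16 * hs
    norm_num at h2
  have hi' : (-i) ^ 2 = -1 := by rw [neg_sq, hi]
  have hα' : (-α) ^ 2 = -(3 / 2) := by rw [neg_sq, hα]
  refine ⟨classify hi hα v hv hq, ?_, ?_, ?_, ?_, card5 ne1, card5 ne2, card10 ne3, card10 ne4,
    disj rfl rfl rfl rfl rfl rfl ?_, disj rfl rfl rfl rfl rfl rfl ?_,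
    disj rfl rfl rfl rfl rfl rfl ?_, disj rfl rfl rfl rfl rfl rfl ?_,
    disj rfl rfl rfl rfl rfl rfl ?_, disj rfl rfl rfl rfl rfl rfl ?_⟩
  · simp [Fin.sum_univ_five]; linear_combination 4 * hi
  · simp [Fin.sum_univ_five]; linear_combination 4 * hi
  · simp [Fin.sum_univ_five]; linear_combination 2 * hα
  · simp [Fin.sum_univ_five]; linear_combination 2 * hα
  all_goals rw [Fin.sum_univ_five, Fin.sum_univ_five]; simp only [Matrix.cons_val]; intro h
  · exact i0 (by linear_combination h / 4)
  · exact key i α hi hα (by linear_combination h)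
  · exact key i (-α) hi hα' (by linear_combination h)
  · exact key (-i) α hi' hα (by linear_combination h)
  · exact key (-i) (-α) hi' hα' (by linear_combination h)
  · exact a0 (by linear_combination h / 4)
end

section
/- Let e_3 = Σ_{0≤i<j<k≤4} x_i x_j x_k ∈ ℂ[x_0,…,x_4]. If v ∈ ℂ^5 satisfies ∂e_3/∂x_i(v) = 0 for all i ∈ {0,…,4} (equivalently, the second elementary symmetric polynomial of the four coordinates of v other than v_i vanishes for each i), then v has at most one nonzero coordinate. Consequently, the singular locus of the cubic threefold Y = {e_3 = 0} ⊂ ℙ^4 consists exactly of the five coordinate points P_0 = [1:0:0:0:0], …, P_4 = [0:0:0:0:1]. -/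
open MvPolynomial

/-- The third elementary symmetric polynomial
`e₃ = Σ_{0 ≤ i < j < k ≤ 4} x_i x_j x_k` in `ℂ[x₀,…,x₄]`. -/
noncomputable def e3 : MvPolynomial (Fin 5) ℂ :=
  ∑ t ∈ Finset.powersetCard 3 (Finset.univ : Finset (Fin 5)), ∏ j ∈ t, X j

lemma e3_expand : e3 = X 0 * X 1 * X 2 + X 0 * X 1 * X 3 + X 0 * X 1 * X 4 + X 0 * X 2 * X 3
    + X 0 * X 2 * X 4 + X 0 * X 3 * X 4 + X 1 * X 2 * X 3 + X 1 * X 2 * X 4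
    + X 1 * X 3 * X 4 + X 2 * X 3 * X 4 := by
  have h : Finset.powersetCard 3 (Finset.univ : Finset (Fin 5)) =
    {{0,1,2},{0,1,3},{0,1,4},{0,2,3},{0,2,4},{0,3,4},{1,2,3},{1,2,4},{1,3,4},{2,3,4}} := by
    decide
  rw [e3, h]
  repeat rw [Finset.sum_insert (by decide)]
  rw [Finset.sum_singleton]
  repeat rw [Finset.prod_insert (by decide), Finset.prod_insert (by decide), Finset.prod_singleton]
  ring

lemma pderiv_e3_eval (v : Fin 5 → ℂ) (j : Fin 5) : eval v (pderiv j e3) =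
    (v 0 * v 1 + v 0 * v 2 + v 0 * v 3 + v 0 * v 4 + v 1 * v 2 + v 1 * v 3 + v 1 * v 4
      + v 2 * v 3 + v 2 * v 4 + v 3 * v 4)
      - v j * (v 0 + v 1 + v 2 + v 3 + v 4) + v j ^ 2 := by
  rw [e3_expand]
  fin_cases j <;> simp [pderiv_X, Pi.single_apply] <;> ring

lemma crit_cases (v : Fin 5 → ℂ) (h : ∀ j : Fin 5, eval v (pderiv j e3) = 0) (j : Fin 5) :
    v j = 0 ∨ v j = v 0 + v 1 + v 2 + v 3 + v 4 := by
  simp only [pderiv_e3_eval] at h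
  have h2 : v j * (v j - (v 0 + v 1 + v 2 + v 3 + v 4)) = 0 := by
    linear_combination h j - (h 0 + h 1 + h 2 + h 3 + h 4) / 3
  rcases mul_eq_zero.mp h2 with h3 | h3
  · exact Or.inl h3
  · exact Or.inr (sub_eq_zero.mp h3)

lemma crit_subsingleton (v : Fin 5 → ℂ) (h : ∀ j : Fin 5, eval v (pderiv j e3) = 0) :
    Set.Subsingleton {j : Fin 5 | v j ≠ 0} := by
  have hc := crit_cases v h
  generalize hs : v 0 + v 1 + v 2 + v 3 + v 4 = s at hc
  by_cases hs0 : s = 0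
  · intro i hi
    exact absurd (by simpa [hs0] using hc i) hi
  classical
  have hcard : ((Finset.univ.filter fun j => v j ≠ 0).card : ℂ) * s = s := by
    have h1 : ∑ j, v j = s := by rw [Fin.sum_univ_five, hs]
    have h2 : ∑ j, v j = ∑ j ∈ Finset.univ.filter (fun j => v j ≠ 0), s := by
      rw [Finset.sum_filter]
      refine Finset.sum_congr rfl fun j _ => ?_
      rcases hc j with h | h
      · simp [h]
      · simp [h, hs0]
    rw [← nsmul_eq_mul, ← Finset.sum_const, ← h2, h1]
  have h1 : (Finset.univ.filter fun j => v j ≠ 0).card = 1 := by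
    have : ((Finset.univ.filter fun j => v j ≠ 0).card : ℂ) = 1 :=
      mul_right_cancel₀ hs0 (by rw [hcard, one_mul])
    exact_mod_cast this
  intro i hi j hj
  exact Finset.card_le_one.mp h1.le i (by simpa using hi) j (by simpa using hj)

/-- If all partial derivatives of `e₃` vanish at `v ∈ ℂ⁵`, then `v` has at most one
nonzero coordinate.  Consequently, the singular locus of the cubic threefold
`Y = {e₃ = 0} ⊂ ℙ⁴` consists exactly of the five coordinate points. -/
theorem stmt_8 :
    (∀ v : Fin 5 → ℂ, (∀ j : Fin 5, eval v (pderiv j e3) = 0) →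
      Set.Subsingleton {j : Fin 5 | v j ≠ 0}) ∧
    (∀ v : Fin 5 → ℂ, v ≠ 0 → eval v e3 = 0 →
      ((∀ j : Fin 5, eval v (pderiv j e3) = 0) ↔
        ∃ (j : Fin 5) (c : ℂ), c ≠ 0 ∧ v = Pi.single j c)) := by
  refine ⟨crit_subsingleton, fun v hv _ => ⟨fun h => ?_, ?_⟩⟩
  · obtain ⟨j, hj⟩ := Function.ne_iff.mp hv
    refine ⟨j, v j, hj, ?_⟩
    funext i
    by_cases hij : i = j
    · subst hij; simp
    · rw [Pi.single_eq_of_ne hij]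
      by_contra hi
      exact hij (crit_subsingleton v h hi hj)
  · rintro ⟨j, c, -, rfl⟩ i
    rw [pderiv_e3_eval]
    fin_cases j <;> fin_cases i <;> simp [Pi.single_apply] <;> ring
end

section
/- Let e_3 = Σ_{0≤i<j<k≤4} x_i x_j x_k ∈ ℂ[x_0,…,x_4], let v ∈ ℂ^5 be nonzero with e_3(v) = 0, and let O(v) = { ℂ·(v∘σ) : σ ∈ S_5 } be the set of complex lines spanned by the coordinate permutations of v, whose cardinality is the length of the S_5-orbit of the point [v] of the cubic threefold Y = {e_3 = 0} ⊂ ℙ^4. If |O(v)| ≤ 5, then either v has exactly one nonzero coordinate (so [v] is one of the five coordinate points, and |O(v)| = 5), or there exist σ ∈ S_5 and c ∈ ℂ \ {0} with v∘σ = c·(−2,3,3,3,3) (and |O(v)| = 5). In particular, Y contains no S_5-fixed point, and Y contains exactly two S_5-orbits of length at most 5: the set of five coordinate points and the orbit of [−2:3:3:3:3]. -/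
open MvPolynomial

lemma e3_eval (v : Fin 5 → ℂ) : eval v e3 =
    v 0 * v 1 * v 2 + v 0 * v 1 * v 3 + v 0 * v 1 * v 4 + v 0 * v 2 * v 3 + v 0 * v 2 * v 4
    + v 0 * v 3 * v 4 + v 1 * v 2 * v 3 + v 1 * v 2 * v 4 + v 1 * v 3 * v 4
    + v 2 * v 3 * v 4 := by
  have h : Finset.powersetCard 3 (Finset.univ : Finset (Fin 5)) =
    {{0,1,2},{0,1,3},{0,1,4},{0,2,3},{0,2,4},{0,3,4},{1,2,3},{1,2,4},{1,3,4},{2,3,4}} := by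
    decide
  unfold e3
  rw [h]
  repeat rw [Finset.sum_insert (by decide)]
  rw [Finset.sum_singleton]
  simp
  ring

lemma e3_perm (v : Fin 5 → ℂ) (τ : Equiv.Perm (Fin 5)) : eval (v ∘ ⇑τ) e3 = eval v e3 := by
  have h : e3 = esymm (Fin 5) ℂ 3 := rfl
  rw [h, ← eval_rename]
  congr 1
  exact esymm_isSymmetric (Fin 5) ℂ 3 τ

/-- pigeonhole property -/
def Pig (v : Fin 5 → ℂ) : Prop :=
  ∀ F : Fin 6 → Fin 5 → Fin 5, (∀ i, Function.Injective (F i)) →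
    ∃ i j, i < j ∧ ∃ c : ℂ, ∀ k, v (F i k) = c * v (F j k)

lemma pig_of (v : Fin 5 → ℂ) (h : (orb v).ncard ≤ 5) : Pig v := by
  intro F hF
  let σ : Fin 6 → Equiv.Perm (Fin 5) := fun i =>
    Equiv.ofBijective (F i) (Finite.injective_iff_bijective.mp (hF i))
  let g : Fin 6 → Set (Fin 5 → ℂ) := fun i => {w | ∃ c : ℂ, w = c • (v ∘ ⇑(σ i))}
  have hg : ¬ Function.Injective g := by
    intro hi
    have h1 : (Set.range g).ncard = 6 := by
      rw [← Nat.card_coe_set_eq, Nat.card_range_of_injective hi]; simp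
    have h2 : Set.range g ⊆ orb v := by
      rintro _ ⟨i, rfl⟩
      exact ⟨σ i, rfl⟩
    have h3 := Set.ncard_le_ncard h2 (Set.finite_range _)
    omega
  have key : ∀ i j, g i = g j → ∃ c : ℂ, ∀ k, v (F i k) = c * v (F j k) := by
    intro i j hij
    have : v ∘ ⇑(σ i) ∈ g i := ⟨1, by simp⟩
    rw [hij] at this
    obtain ⟨c, hc⟩ := this
    exact ⟨c, fun k => congrFun hc k⟩
  simp only [Function.Injective, not_forall] at hg
  obtain ⟨i, j, hij, hne⟩ := hg
  rcases lt_or_gt_of_ne hne with h' | h'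
  · exact ⟨i, j, h', key i j hij⟩
  · exact ⟨j, i, h', key j i hij.symm⟩

lemma pig_perm (v : Fin 5 → ℂ) (h : Pig v) (τ : Equiv.Perm (Fin 5)) : Pig (v ∘ ⇑τ) := by
  intro F hF
  exact h (fun i => τ ∘ F i) (fun i => τ.injective.comp (hF i))

lemma pigB (w : Fin 5 → ℂ) (h : Pig w) (h1 : w 1 = - w 0) (h2 : w 2 = 0) (h3 : w 3 = 0)
    (h4 : w 4 = 0) : w 0 = 0 := by
  obtain ⟨i, j, hij, c, hc⟩ := h ![![0,1,2,3,4], ![0,2,1,3,4], ![0,2,3,1,4], ![0,2,3,4,1],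
    ![2,0,1,3,4], ![2,0,3,1,4]] (by decide)
  have e0 := hc 0
  have e1 := hc 1
  have e2 := hc 2
  have e3 := hc 3
  have e4 := hc 4
  clear hc h
  fin_cases i <;> fin_cases j <;> simp at hij <;> simp at e0 e1 e2 e3 e4 <;> grind

lemma pigC (w : Fin 5 → ℂ) (h : Pig w) (h1 : w 1 = w 0) (h3 : w 3 = w 2)
    (h4 : w 4 = w 2) : w 0 = w 2 := by
  obtain ⟨i, j, hij, c, hc⟩ := h ![![0,1,2,3,4], ![0,2,1,3,4], ![0,2,3,1,4], ![0,2,3,4,1],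
    ![2,0,1,3,4], ![2,0,3,1,4]] (by decide)
  have e0 := hc 0
  have e1 := hc 1
  have e2 := hc 2
  have e3 := hc 3
  have e4 := hc 4
  clear hc h
  fin_cases i <;> fin_cases j <;> simp at hij <;> simp at e0 e1 e2 e3 e4 <;> grind

lemma pigA0 (w : Fin 5 → ℂ) (h : Pig w) : w 0 = w 1 ∨ w 0 = w 2 ∨ w 1 = w 2 ∨
    (w 3 = 0 ∧ w 4 = 0 ∧ w 0 + w 1 + w 2 = 0) := by
  obtain ⟨i, j, hij, c, hc⟩ := h ![![0,1,2,3,4], ![0,2,1,3,4], ![1,0,2,3,4], ![1,2,0,3,4],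
    ![2,0,1,3,4], ![2,1,0,3,4]] (by decide)
  have e0 := hc 0
  have e1 := hc 1
  have e2 := hc 2
  have e3 := hc 3
  have e4 := hc 4
  clear hc h
  by_cases hc : c = 1
  · subst hc
    fin_cases i <;> fin_cases j <;> simp at hij <;> simp at e0 e1 e2 <;> grind
  · have hc' : c - 1 ≠ 0 := sub_ne_zero.mpr hc
    refine Or.inr (Or.inr (Or.inr ?_))
    have a3 : w 3 = c * w 3 := by fin_cases i <;> fin_cases j <;> simpa using e3
    have a4 : w 4 = c * w 4 := by fin_cases i <;> fin_cases j <;> simpa using e4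
    have a5 : w 0 + w 1 + w 2 = c * (w 0 + w 1 + w 2) := by
      fin_cases i <;> fin_cases j <;> simp at hij <;> simp at e0 e1 e2 <;>
        linear_combination e0 + e1 + e2
    refine ⟨?_, ?_, ?_⟩ <;> apply mul_left_cancel₀ hc'
    · linear_combination -a3
    · linear_combination -a4
    · linear_combination -a5

/-- permutation from an injective table -/
noncomputable def mkP (f : Fin 5 → Fin 5) (h : Function.Injective f) : Equiv.Perm (Fin 5) :=
  Equiv.ofBijective f (Finite.injective_iff_bijective.mp h)

lemma pigA (w : Fin 5 → ℂ) (h : Pig w) (he : eval w e3 = 0) :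
    w 0 = w 1 ∨ w 0 = w 2 ∨ w 1 = w 2 := by
  rcases pigA0 w h with h' | h' | h' | ⟨h3, h4, hs⟩
  · exact Or.inl h'
  · exact Or.inr (Or.inl h')
  · exact Or.inr (Or.inr h')
  · rw [e3_eval, h3, h4] at he
    have hp : w 0 * w 1 * w 2 = 0 := by linear_combination he
    rcases mul_eq_zero.mp hp with hp | hp
    · rcases mul_eq_zero.mp hp with hp | hp
      · have := pigB _ (pig_perm w h (mkP ![1,2,0,3,4] (by decide)))
        simp [mkP] at this
        grind
      · have := pigB _ (pig_perm w h (mkP ![0,2,1,3,4] (by decide)))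
        simp [mkP] at this
        grind
    · have := pigB w h
      grind

lemma pig_all (v : Fin 5 → ℂ) (h : Pig v) (he : eval v e3 = 0) :
    ∃ τ : Equiv.Perm (Fin 5), ∀ k, k ≠ 0 → v (τ k) = v (τ 1) := by
  have A : ∀ f : Fin 5 → Fin 5, Function.Injective f →
      v (f 0) = v (f 1) ∨ v (f 0) = v (f 2) ∨ v (f 1) = v (f 2) := fun f hf =>
    pigA _ (pig_perm v h (mkP f hf)) (by rw [e3_perm, he])
  have C : ∀ f : Fin 5 → Fin 5, Function.Injective f →
      v (f 1) = v (f 0) → v (f 3) = v (f 2) → v (f 4) = v (f 2) → v (f 0) = v (f 2) :=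
    fun f hf => pigC _ (pig_perm v h (mkP f hf))
  have a1 := A ![0,1,2,3,4] (by decide)
  have a2 := A ![0,1,3,2,4] (by decide)
  have a3 := A ![0,1,4,2,3] (by decide)
  have a4 := A ![0,2,3,1,4] (by decide)
  have a5 := A ![0,2,4,1,3] (by decide)
  have a6 := A ![0,3,4,1,2] (by decide)
  have c1 := C ![0,1,2,3,4] (by decide)
  have c2 := C ![0,2,1,3,4] (by decide)
  have c3 := C ![0,3,1,2,4] (by decide)
  have c4 := C ![0,4,1,2,3] (by decide)
  have c5 := C ![1,2,0,3,4] (by decide)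
  have c6 := C ![1,3,0,2,4] (by decide)
  have c7 := C ![1,4,0,2,3] (by decide)
  have c8 := C ![2,3,0,1,4] (by decide)
  have c9 := C ![2,4,0,1,3] (by decide)
  have c10 := C ![3,4,0,1,2] (by decide)
  simp at a1 a2 a3 a4 a5 a6 c1 c2 c3 c4 c5 c6 c7 c8 c9 c10
  have D : (v 2 = v 1 ∧ v 3 = v 1 ∧ v 4 = v 1) ∨ (v 2 = v 0 ∧ v 3 = v 0 ∧ v 4 = v 0) ∨
    (v 1 = v 0 ∧ v 3 = v 0 ∧ v 4 = v 0) ∨ (v 1 = v 0 ∧ v 2 = v 0 ∧ v 4 = v 0) ∨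
    (v 1 = v 0 ∧ v 2 = v 0 ∧ v 3 = v 0) := by
    clear A C
    by_cases b1 : v 1 = v 0 <;> by_cases b2 : v 2 = v 0 <;> by_cases b3 : v 3 = v 0 <;>
      by_cases b4 : v 4 = v 0 <;> grind
  clear a1 a2 a3 a4 a5 a6 c1 c2 c3 c4 c5 c6 c7 c8 c9 c10 A C
  rcases D with ⟨x, y, z⟩ | ⟨x, y, z⟩ | ⟨x, y, z⟩ | ⟨x, y, z⟩ | ⟨x, y, z⟩
  · refine ⟨mkP ![0,1,2,3,4] (by decide), fun k hk => ?_⟩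
    fin_cases k <;> simp_all [mkP]
  · refine ⟨mkP ![1,0,2,3,4] (by decide), fun k hk => ?_⟩
    fin_cases k <;> simp_all [mkP]
  · refine ⟨mkP ![2,0,1,3,4] (by decide), fun k hk => ?_⟩
    fin_cases k <;> simp_all [mkP]
  · refine ⟨mkP ![3,0,1,2,4] (by decide), fun k hk => ?_⟩
    fin_cases k <;> simp_all [mkP]
  · refine ⟨mkP ![4,0,1,2,3] (by decide), fun k hk => ?_⟩
    fin_cases k <;> simp_all [mkP]

/-- the vector with entry `a` at `k` and `b` elsewhere -/
noncomputable def vec (a b : ℂ) (k : Fin 5) : Fin 5 → ℂ := fun j => if j = k then a else b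

lemma vec_comp (a b : ℂ) (k : Fin 5) (σ : Equiv.Perm (Fin 5)) :
    vec a b k ∘ ⇑σ = vec a b (σ.symm k) := by
  funext j
  simp [vec, Equiv.eq_symm_apply]

lemma orb_vec (a b : ℂ) (k : Fin 5) :
    orb (vec a b k) = Set.range fun l : Fin 5 => {w | ∃ c : ℂ, w = c • vec a b l} := by
  ext s
  simp only [orb, Set.mem_range, vec_comp]
  constructor
  · rintro ⟨σ, rfl⟩
    exact ⟨_, rfl⟩
  · rintro ⟨l, rfl⟩
    exact ⟨Equiv.swap k l, by simp⟩

lemma third : ∀ k l : Fin 5, ∃ m, m ≠ k ∧ m ≠ l := by decide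

lemma ncard_vec (a b : ℂ) (hab : a ≠ b) (k : Fin 5) : (orb (vec a b k)).ncard = 5 := by
  rw [orb_vec, ← Nat.card_coe_set_eq, Nat.card_range_of_injective]
  · simp
  intro p q hpq
  by_contra hne
  have h : vec a b p ∈ {w | ∃ c : ℂ, w = c • vec a b p} := ⟨1, by simp⟩
  dsimp only at hpq
  rw [hpq] at h
  obtain ⟨c, hc⟩ := h
  obtain ⟨m, hm1, hm2⟩ := third p q
  have e1 := congrFun hc p
  have e2 := congrFun hc q
  have e3 := congrFun hc m
  simp [vec, hm1, hm2, hne, Ne.symm hne] at e1 e2 e3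
  grind

lemma vec_single (c : ℂ) (j : Fin 5) : Pi.single j c = vec c 0 j := by
  funext k
  simp [vec, Pi.single_apply]

lemma vec_lit : (![-2, 3, 3, 3, 3] : Fin 5 → ℂ) = vec (-2) 3 0 := by
  funext k
  fin_cases k <;> simp [vec]

lemma part1 (v : Fin 5 → ℂ) (hv : v ≠ 0) (he : eval v e3 = 0) (ho : (orb v).ncard ≤ 5) :
    ((∃ (j : Fin 5) (c : ℂ), c ≠ 0 ∧ v = Pi.single j c) ∨
        (∃ (σ : Equiv.Perm (Fin 5)) (c : ℂ), c ≠ 0 ∧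
          v ∘ ⇑σ = c • (![-2, 3, 3, 3, 3] : Fin 5 → ℂ))) ∧
        (orb v).ncard = 5 := by
  obtain ⟨τ, hτ⟩ := pig_all v (pig_of v ho) he
  obtain ⟨a, ha⟩ : ∃ a, a = v (τ 0) := ⟨_, rfl⟩
  obtain ⟨b, hb⟩ : ∃ b, b = v (τ 1) := ⟨_, rfl⟩
  have hw : v ∘ ⇑τ = vec a b 0 := by
    funext k
    by_cases hk : k = 0
    · simp [vec, hk, ha]
    · simp [vec, hk, hb, hτ k hk]
  have hvv : v = vec a b (τ 0) := by
    have := congrArg (fun f => f ∘ ⇑τ.symm) hw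
    simp only [vec_comp] at this
    simpa [Function.comp_assoc] using this
  have h0 : ¬ (a = 0 ∧ b = 0) := by
    rintro ⟨rfl, rfl⟩
    apply hv
    rw [hvv]
    funext k
    simp [vec]
  have hee : b ^ 2 * (3 * a + 2 * b) = 0 := by
    rw [← e3_perm v τ, hw, e3_eval] at he
    simp [vec] at he
    linear_combination he / 2
  have hab : a ≠ b := by
    rintro rfl
    grind
  refine ⟨?_, by rw [hvv]; exact ncard_vec a b hab _⟩
  rcases mul_eq_zero.mp hee with hb0 | hb0
  · left
    have hb0 : b = 0 := by simpa using hb0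
    refine ⟨τ 0, a, fun h => h0 ⟨h, hb0⟩, ?_⟩
    rw [vec_single, hvv, hb0]
  · right
    refine ⟨τ, b / 3, fun h => ?_, ?_⟩
    · grind
    · rw [hw, vec_lit]
      funext k
      by_cases hk : k = 0
      · simp [vec, hk]
        linear_combination hb0 / 3
      · simp [vec, hk]

/-- Lemma 3.7 (small orbits on the cubic `Y = {e₃ = 0} ⊂ ℙ⁴`): any point of `Y` whose
`S₅`-orbit has length at most `5` is either a coordinate point or lies in the orbit of
`[−2:3:3:3:3]`, and in both cases the orbit has length exactly `5`.  In particular `Y`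
contains no `S₅`-fixed point, the points `[1:0:0:0:0]` and `[−2:3:3:3:3]` lie on `Y`,
their orbits have length `5`, and these two orbits are disjoint — so `Y` contains
exactly two `S₅`-orbits of length at most `5`. -/
theorem stmt_9 :
    (∀ v : Fin 5 → ℂ, v ≠ 0 → eval v e3 = 0 → (orb v).ncard ≤ 5 →
      ((∃ (j : Fin 5) (c : ℂ), c ≠ 0 ∧ v = Pi.single j c) ∨
        (∃ (σ : Equiv.Perm (Fin 5)) (c : ℂ), c ≠ 0 ∧
          v ∘ ⇑σ = c • (![-2, 3, 3, 3, 3] : Fin 5 → ℂ))) ∧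
        (orb v).ncard = 5) ∧
    (¬∃ v : Fin 5 → ℂ, v ≠ 0 ∧ eval v e3 = 0 ∧
      ∀ σ : Equiv.Perm (Fin 5), ∃ c : ℂ, v ∘ ⇑σ = c • v) ∧
    eval (Pi.single 0 (1 : ℂ)) e3 = 0 ∧
    eval (![-2, 3, 3, 3, 3] : Fin 5 → ℂ) e3 = 0 ∧
    (orb (Pi.single 0 (1 : ℂ))).ncard = 5 ∧
    (orb (![-2, 3, 3, 3, 3] : Fin 5 → ℂ)).ncard = 5 ∧
    orb (Pi.single 0 (1 : ℂ)) ∩ orb (![-2, 3, 3, 3, 3] : Fin 5 → ℂ) = ∅ := by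
  refine ⟨part1, ?_, ?_, ?_, ?_, ?_, ?_⟩
  · rintro ⟨v, hv, he, hs⟩
    have h1 : (orb v).ncard ≤ 1 := by
      unfold orb
      rw [Set.ncard_le_one (Set.finite_range _)]
      have key : ∀ σ : Equiv.Perm (Fin 5),
          {w | ∃ c : ℂ, w = c • (v ∘ ⇑σ)} = {w | ∃ c : ℂ, w = c • v} := by
        intro σ
        obtain ⟨c, hc⟩ := hs σ
        have hc0 : c ≠ 0 := by
          rintro rfl
          apply hv
          funext k
          have := congrFun hc (σ.symm k)
          simpa using this
        ext w
        simp only [Set.mem_setOf_eq, hc]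
        constructor
        · rintro ⟨d, rfl⟩
          exact ⟨d * c, by rw [smul_smul]⟩
        · rintro ⟨d, rfl⟩
          exact ⟨d / c, by rw [smul_smul, div_mul_cancel₀ _ hc0]⟩
      rintro _ ⟨σ, rfl⟩ _ ⟨σ', rfl⟩
      simp only [key]
    have := (part1 v hv he (by omega)).2
    omega
  · rw [e3_eval]; simp
  · rw [e3_eval]; simp; norm_num
  · rw [vec_single]; exact ncard_vec _ _ (by norm_num) _
  · rw [vec_lit]; exact ncard_vec _ _ (by norm_num) _
  · rw [vec_single, vec_lit, orb_vec, orb_vec]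
    ext s
    simp only [Set.mem_inter_iff, Set.mem_range, Set.mem_empty_iff_false, iff_false]
    rintro ⟨⟨p, rfl⟩, ⟨q, hq⟩⟩
    have h : vec 1 0 p ∈ {w | ∃ c : ℂ, w = c • vec 1 0 p} := ⟨1, by simp⟩
    rw [← hq] at h
    obtain ⟨c, hc⟩ := h
    obtain ⟨m, hm1, hm2⟩ := third p q
    have e1 := congrFun hc p
    have e3 := congrFun hc m
    simp [vec, hm1, hm2] at e1 e3
    simp [e3] at e1
end
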